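/- arXiv:cs/0510017 — 2 statements merged into one kernel-verified Lean document; each statement's English description precedes it below -/
import Mathlib

section
/- Let 0 < α < 1 and 0 < p < 1 with p ≠ 1/2 be fixed, and let k_n be the integers from the two-point concentration of F_n(α) (so that k_n = log_{1/√(pq)} n − (|ln(p/q)| / (2 ln^{3/2}(1/√(pq)))) · Φ^{-1}(α) · √(ln n) + O(1)). Then E[X̄_{k_n}] = α + O(1/√(log n)); i.e., there is a constant C such that |E[X̄_{k_n}] − α| ≤ C/√(log n) for all n ≥ 2. -/
/-!
Partial fillup in tries (Janson–Szpankowski), Theorem 1 (two-point concentration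
of the α-fillup level `F_n(α)`).

Model: an outcome `ω : ℕ → ℕ → Bool` encodes infinitely many strings, where
`ω i j` is the `j`-th bit of the `i`-th string; the measure `ν` makes all bits
i.i.d. with `P(bit = 1) = p`.  The trie on `n` strings uses strings `0,…,n-1`.
-/

open MeasureTheory ProbabilityTheory Real Filter

/-- The number of strings among the first `n` (encoded in `ω`) whose first `k` bits
form the word `r ∈ {0,1}^k`. -/
def prefCount (ω : ℕ → ℕ → Bool) (n k : ℕ) (r : Fin k → Bool) : ℕ :=
  ((Finset.range n).filter fun i => ∀ j : Fin k, ω i j = r j).card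

/-- `X_k`: the number of words `r ∈ {0,1}^k` that are prefixes of at least two of the
first `n` strings. -/
def fillCount (ω : ℕ → ℕ → Bool) (n k : ℕ) : ℕ :=
  (Finset.univ.filter fun r : Fin k → Bool => 2 ≤ prefCount ω n k r).card

/-- `X̄_k = X_k / 2^k`, the proportion of filled words at level `k`. -/
noncomputable def fracFilled (ω : ℕ → ℕ → Bool) (n k : ℕ) : ℝ :=
  (fillCount ω n k : ℝ) / 2 ^ k

/-- The α-fillup level `F_n(α) = max {k : X̄_k ≥ α}`. -/
noncomputable def fillupLevel (α : ℝ) (ω : ℕ → ℕ → Bool) (n : ℕ) : ℕ :=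
  sSup {k | α ≤ fracFilled ω n k}

/-- `ν` is a probability measure on `ℕ → ℕ → Bool` under which all the bits
`ω i j` are i.i.d. with `P(bit = 1) = p` (characterized by cylinder probabilities). -/
def IIDBits (p : ℝ) (ν : Measure (ℕ → ℕ → Bool)) : Prop :=
  IsProbabilityMeasure ν ∧
    ∀ (S : Finset (ℕ × ℕ)) (b : ℕ × ℕ → Bool),
      ν {ω | ∀ s ∈ S, ω s.1 s.2 = b s} =
        ∏ s ∈ S, ENNReal.ofReal (if b s then p else 1 - p)


namespace Fill

/-- Expectation of a function of `n` i.i.d. samples from a finite weighted type. -/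
def Ex {T : Type} [Fintype T] (P : T → ℝ) (n : ℕ) (F : (Fin n → T) → ℝ) : ℝ :=
  ∑ v : Fin n → T, (∏ i, P (v i)) * F v

lemma Ex_succ {T : Type} [Fintype T] (P : T → ℝ) (n : ℕ) (F : (Fin (n+1) → T) → ℝ) :
    Ex P (n+1) F = ∑ t, P t * Ex P n (fun v => F (Fin.cons t v)) := by
  unfold Ex
  rw [← (Fin.consEquiv (fun _ : Fin (n+1) => T)).sum_comp, Fintype.sum_prod_type]
  refine Finset.sum_congr rfl fun t _ => ?_
  rw [Finset.mul_sum]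
  refine Finset.sum_congr rfl fun v _ => ?_
  simp [Fin.consEquiv, Fin.prod_univ_succ, mul_assoc]

lemma Ex_zero {T : Type} [Fintype T] (P : T → ℝ) (F : (Fin 0 → T) → ℝ) :
    Ex P 0 F = F Fin.elim0 := by
  unfold Ex
  simp
  congr 1

lemma Ex_nonneg {T : Type} [Fintype T] {P : T → ℝ} (hP : ∀ t, 0 ≤ P t) (n : ℕ)
    {F : (Fin n → T) → ℝ} (hF : ∀ v, 0 ≤ F v) : 0 ≤ Ex P n F :=
  Finset.sum_nonneg fun v _ => mul_nonneg (Finset.prod_nonneg fun _ _ => hP _) (hF v)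

lemma Ex_mono {T : Type} [Fintype T] {P : T → ℝ} (hP : ∀ t, 0 ≤ P t) (n : ℕ)
    {F F' : (Fin n → T) → ℝ} (hF : ∀ v, F v ≤ F' v) : Ex P n F ≤ Ex P n F' :=
  Finset.sum_le_sum fun v _ =>
    mul_le_mul_of_nonneg_left (hF v) (Finset.prod_nonneg fun _ _ => hP _)

lemma Ex_one {T : Type} [Fintype T] {P : T → ℝ} (hP : ∑ t, P t = 1) (n : ℕ) :
    Ex P n (fun _ => 1) = 1 := by
  induction n with
  | zero => rw [Ex_zero]
  | succ n ih => rw [Ex_succ]; simp [ih, hP]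

lemma Ex_sum {T ι : Type} [Fintype T] (P : T → ℝ) (n : ℕ) (s : Finset ι)
    (F : ι → (Fin n → T) → ℝ) : Ex P n (fun v => ∑ i ∈ s, F i v) = ∑ i ∈ s, Ex P n (F i) := by
  unfold Ex
  simp_rw [Finset.mul_sum]
  rw [Finset.sum_comm]

lemma Ex_sub {T : Type} [Fintype T] (P : T → ℝ) (n : ℕ)
    (F F' : (Fin n → T) → ℝ) : Ex P n (fun v => F v - F' v) = Ex P n F - Ex P n F' := by
  unfold Ex
  simp_rw [mul_sub]
  rw [Finset.sum_sub_distrib]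

lemma Ex_add {T : Type} [Fintype T] (P : T → ℝ) (n : ℕ)
    (F F' : (Fin n → T) → ℝ) : Ex P n (fun v => F v + F' v) = Ex P n F + Ex P n F' := by
  unfold Ex
  simp_rw [mul_add]
  rw [Finset.sum_add_distrib]

lemma Ex_mul {T : Type} [Fintype T] (P : T → ℝ) (n : ℕ) (c : ℝ)
    (F : (Fin n → T) → ℝ) : Ex P n (fun v => c * F v) = c * Ex P n F := by
  unfold Ex
  rw [Finset.mul_sum]
  refine Finset.sum_congr rfl fun v _ => by ring

/-- number of samples equal to `r` -/
def cnt {T : Type} [DecidableEq T] {n : ℕ} (v : Fin n → T) (r : T) : ℕ :=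
  ∑ i, if v i = r then 1 else 0

lemma cnt_cons {T : Type} [DecidableEq T] {n : ℕ} (t : T) (v : Fin n → T) (r : T) :
    cnt (Fin.cons t v : Fin (n+1) → T) r = (if t = r then 1 else 0) + cnt v r := by
  unfold cnt
  rw [Fin.sum_univ_succ]
  simp only [Fin.cons_zero, Fin.cons_succ]

/-- indicator of `cnt ≤ 0` -/
def A0 {T : Type} [DecidableEq T] {n : ℕ} (r : T) (v : Fin n → T) : ℝ :=
  if cnt v r ≤ 0 then 1 else 0
/-- indicator of `cnt ≤ 1` -/
def A1 {T : Type} [DecidableEq T] {n : ℕ} (r : T) (v : Fin n → T) : ℝ :=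
  if cnt v r ≤ 1 then 1 else 0

lemma A0_nonneg {T : Type} [DecidableEq T] {n : ℕ} (r : T) (v : Fin n → T) : 0 ≤ A0 r v := by
  unfold A0; split_ifs <;> norm_num
lemma A1_nonneg {T : Type} [DecidableEq T] {n : ℕ} (r : T) (v : Fin n → T) : 0 ≤ A1 r v := by
  unfold A1; split_ifs <;> norm_num
lemma A1_le {T : Type} [DecidableEq T] {n : ℕ} (r : T) (v : Fin n → T) : A1 r v ≤ 1 := by
  unfold A1; split_ifs <;> norm_num
lemma A0_le {T : Type} [DecidableEq T] {n : ℕ} (r : T) (v : Fin n → T) : A0 r v ≤ A1 r v := by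
  unfold A0 A1; split_ifs <;> first | omega | norm_num
lemma A0_cons {T : Type} [DecidableEq T] {n : ℕ} (r t : T) (v : Fin n → T) :
    A0 r (Fin.cons t v : Fin (n+1) → T) = if t = r then 0 else A0 r v := by
  unfold A0; rw [cnt_cons]; split_ifs <;> first | rfl | omega
lemma A1_cons {T : Type} [DecidableEq T] {n : ℕ} (r t : T) (v : Fin n → T) :
    A1 r (Fin.cons t v : Fin (n+1) → T) = if t = r then A0 r v else A1 r v := by
  unfold A1 A0; rw [cnt_cons]; split_ifs <;> first | rfl | omega

lemma sum_split1 {T : Type} [Fintype T] [DecidableEq T] {P : T → ℝ} (hP : ∑ t, P t = 1)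
    (r : T) (X Z : ℝ) (f : T → ℝ) (h1 : f r = X) (h3 : ∀ t, t ≠ r → f t = Z) :
    ∑ t, P t * f t = P r * X + (1 - P r) * Z := by
  have : ∀ t, P t * f t = (if t = r then P r * (X - Z) else 0) + P t * Z := by
    intro t
    by_cases h : t = r
    · subst h; simp [h1]; ring
    · simp [h, h3 t h]
  simp_rw [this]
  rw [Finset.sum_add_distrib, ← Finset.sum_mul, hP]
  simp; ring

lemma sum_split2 {T : Type} [Fintype T] [DecidableEq T] {P : T → ℝ} (hP : ∑ t, P t = 1)
    (r s : T) (hrs : r ≠ s) (X Y Z : ℝ) (f : T → ℝ) (h1 : f r = X) (h2 : f s = Y)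
    (h3 : ∀ t, t ≠ r → t ≠ s → f t = Z) :
    ∑ t, P t * f t = P r * X + P s * Y + (1 - P r - P s) * Z := by
  have : ∀ t, P t * f t = (if t = r then P r * (X - Z) else 0)
      + (if t = s then P s * (Y - Z) else 0) + P t * Z := by
    intro t
    by_cases h : t = r
    · subst h; simp [h1, hrs]; ring
    · by_cases h' : t = s
      · subst h'; simp [h2, h]; ring
      · simp [h, h', h3 t h h']
  simp_rw [this]
  rw [Finset.sum_add_distrib, Finset.sum_add_distrib, ← Finset.sum_mul, hP]
  simp; ring

section
variable {T : Type} [Fintype T] [DecidableEq T] {P : T → ℝ}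

lemma F0_succ (hP : ∑ t, P t = 1) (n : ℕ) (r : T) :
    Ex P (n+1) (A0 r) = (1 - P r) * Ex P n (A0 r) := by
  rw [Ex_succ, sum_split1 hP r 0 (Ex P n (A0 r))]
  · ring
  · simp [A0_cons, Ex]
  · intro t ht; simp [A0_cons, ht]

lemma F1_succ (hP : ∑ t, P t = 1) (n : ℕ) (r : T) :
    Ex P (n+1) (A1 r) = P r * Ex P n (A0 r) + (1 - P r) * Ex P n (A1 r) := by
  rw [Ex_succ, sum_split1 hP r (Ex P n (A0 r)) (Ex P n (A1 r))]
  · simp only [A1_cons, if_true]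
  · intro t ht; simp only [A1_cons, ht, if_false]

lemma F0_eq (hP : ∑ t, P t = 1) (n : ℕ) (r : T) :
    Ex P n (A0 r) = (1 - P r)^n := by
  induction n with
  | zero => simp [Ex_zero, A0, cnt]
  | succ n ih => rw [F0_succ hP, ih]; ring

lemma F1_eq (hP : ∑ t, P t = 1) (n : ℕ) (r : T) :
    Ex P n (A1 r) = (1 - P r)^n + n * P r * (1 - P r)^(n-1) := by
  induction n with
  | zero => simp [Ex_zero, A1, cnt]
  | succ n ih =>
    rw [F1_succ hP, ih, F0_eq hP]
    rcases n with _ | n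
    · simp
    · push_cast; ring

lemma neg_corr (hP0 : ∀ t, 0 ≤ P t) (hP : ∑ t, P t = 1) (r s : T) (hrs : r ≠ s) (n : ℕ) :
    Ex P n (fun v => A0 r v * A0 s v) ≤ Ex P n (A0 r) * Ex P n (A0 s) ∧
    Ex P n (fun v => A0 r v * A1 s v) ≤ Ex P n (A0 r) * Ex P n (A1 s) ∧
    Ex P n (fun v => A1 r v * A0 s v) ≤ Ex P n (A1 r) * Ex P n (A0 s) ∧
    Ex P n (fun v => A1 r v * A1 s v) ≤ Ex P n (A1 r) * Ex P n (A1 s) := by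
  have hsum : P r + P s ≤ 1 := by
    rw [← hP, ← Finset.sum_pair hrs]
    exact Finset.sum_le_sum_of_subset_of_nonneg (Finset.subset_univ _) fun i _ _ => hP0 i
  have hr := hP0 r
  have hs := hP0 s
  induction n with
  | zero => simp [Ex_zero, A1, A0, cnt]
  | succ n ih =>
    obtain ⟨h00, h01, h10, h11⟩ := ih
    have e00 : Ex P (n+1) (fun v => A0 r v * A0 s v) =
        (1 - P r - P s) * Ex P n (fun v => A0 r v * A0 s v) := by
      rw [Ex_succ, sum_split2 hP r s hrs 0 0 (Ex P n (fun v => A0 r v * A0 s v))]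
      · ring
      · simp [A0_cons]; simp [Ex]
      · simp [A0_cons]; simp [Ex]
      · intro t h1 h2; simp [A0_cons, h1, h2]
    have e01 : Ex P (n+1) (fun v => A0 r v * A1 s v) =
        P s * Ex P n (fun v => A0 r v * A0 s v) +
        (1 - P r - P s) * Ex P n (fun v => A0 r v * A1 s v) := by
      rw [Ex_succ, sum_split2 hP r s hrs 0 (Ex P n (fun v => A0 r v * A0 s v))
        (Ex P n (fun v => A0 r v * A1 s v))]
      · ring
      · simp [A0_cons]; simp [Ex]
      · simp [A0_cons, A1_cons, hrs.symm]
      · intro t h1 h2; simp [A0_cons, A1_cons, h1, h2]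
    have e10 : Ex P (n+1) (fun v => A1 r v * A0 s v) =
        P r * Ex P n (fun v => A0 r v * A0 s v) +
        (1 - P r - P s) * Ex P n (fun v => A1 r v * A0 s v) := by
      rw [Ex_succ, sum_split2 hP r s hrs (Ex P n (fun v => A0 r v * A0 s v)) 0
        (Ex P n (fun v => A1 r v * A0 s v))]
      · ring
      · simp [A0_cons, A1_cons, hrs]
      · simp [A0_cons]; simp [Ex]
      · intro t h1 h2; simp [A0_cons, A1_cons, h1, h2]
    have e11 : Ex P (n+1) (fun v => A1 r v * A1 s v) =
        P r * Ex P n (fun v => A0 r v * A1 s v) + P s * Ex P n (fun v => A1 r v * A0 s v) +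
        (1 - P r - P s) * Ex P n (fun v => A1 r v * A1 s v) := by
      rw [Ex_succ, sum_split2 hP r s hrs (Ex P n (fun v => A0 r v * A1 s v))
        (Ex P n (fun v => A1 r v * A0 s v))
        (Ex P n (fun v => A1 r v * A1 s v))]
      · simp [A1_cons, hrs]
      · simp [A1_cons, hrs.symm]
      · intro t h1 h2; simp [A1_cons, h1, h2]
    rw [e00, e01, e10, e11, F0_succ hP, F0_succ hP, F1_succ hP, F1_succ hP]
    have a0 : 0 ≤ Ex P n (A0 r) := Ex_nonneg hP0 n (A0_nonneg r)
    have b0 : 0 ≤ Ex P n (A0 s) := Ex_nonneg hP0 n (A0_nonneg s)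
    have a1 : Ex P n (A0 r) ≤ Ex P n (A1 r) := Ex_mono hP0 n (A0_le r)
    have b1 : Ex P n (A0 s) ≤ Ex P n (A1 s) := Ex_mono hP0 n (A0_le s)
    generalize Ex P n (A0 r) = F0 at *
    generalize Ex P n (A0 s) = G0 at *
    generalize Ex P n (A1 r) = F1 at *
    generalize Ex P n (A1 s) = G1 at *
    generalize P r = x at *
    generalize P s = y at *
    have hw : 0 ≤ 1 - x - y := by linarith
    have hxy : 0 ≤ x * y := mul_nonneg hr hs
    have m00 := mul_le_mul_of_nonneg_left h00 hw
    have m01 := mul_le_mul_of_nonneg_left h01 hw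
    have m10 := mul_le_mul_of_nonneg_left h10 hw
    have m11 := mul_le_mul_of_nonneg_left h11 hw
    have x00 := mul_le_mul_of_nonneg_left h00 hr
    have x01 := mul_le_mul_of_nonneg_left h01 hr
    have y00 := mul_le_mul_of_nonneg_left h00 hs
    have y10 := mul_le_mul_of_nonneg_left h10 hs
    refine ⟨?_, ?_, ?_, ?_⟩
    · have := mul_nonneg hxy (mul_nonneg a0 b0); linarith
    · have := mul_nonneg hxy (mul_nonneg a0 (sub_nonneg.2 b1)); linarith
    · have := mul_nonneg hxy (mul_nonneg (sub_nonneg.2 a1) b0); linarith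
    · have := mul_nonneg hxy (mul_nonneg (sub_nonneg.2 a1) (sub_nonneg.2 b1)); linarith

/-- second moment bound: the fraction of types with at least two samples. -/
lemma var_bound (hP0 : ∀ t, 0 ≤ P t) (hP : ∑ t, P t = 1) (n : ℕ) :
    Ex P n (fun v => (∑ r, A1 r v) ^ 2) ≤
      (∑ r, Ex P n (A1 r)) ^ 2 + Fintype.card T := by
  have h1 : (fun v : Fin n → T => (∑ r, A1 r v) ^ 2) =
      fun v => ∑ r, ∑ s, A1 r v * A1 s v := by
    funext v; rw [sq, Finset.sum_mul_sum]
  rw [h1, Ex_sum]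
  simp_rw [Ex_sum]
  rw [sq, Finset.sum_mul_sum]
  have : (Fintype.card T : ℝ) = ∑ r : T, ∑ s : T, if r = s then 1 else 0 := by simp
  rw [this, ← Finset.sum_add_distrib]
  refine Finset.sum_le_sum fun r _ => ?_
  rw [← Finset.sum_add_distrib]
  refine Finset.sum_le_sum fun s _ => ?_
  by_cases h : r = s
  · subst h
    have : Ex P n (fun v => A1 r v * A1 r v) ≤ Ex P n (fun _ => 1) := by
      refine Ex_mono hP0 n fun v => ?_
      have := A1_le r v
      have := A1_nonneg r v
      nlinarith
    rw [Ex_one hP] at this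
    have h2 := mul_self_nonneg (Ex P n (A1 r))
    simp; linarith
  · have := (neg_corr hP0 hP r s h n).2.2.2
    simp [h, this]
end

end Fill

namespace Fill

/-- probability of the word `r` -/
noncomputable def wt (p : ℝ) {k : ℕ} (r : Fin k → Bool) : ℝ := ∏ j, if r j then p else 1 - p

/-- average of `f (P(r))` over uniformly random words of length `k` -/
noncomputable def W (p : ℝ) (k : ℕ) (f : ℝ → ℝ) : ℝ := (∑ r : Fin k → Bool, f (wt p r)) / 2 ^ k

/-- probability that a `Bin(n,x)` variable is at least two -/
noncomputable def G (n : ℕ) (x : ℝ) : ℝ := 1 - ((1 - x) ^ n + n * x * (1 - x) ^ (n - 1))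

lemma W_succ (p : ℝ) (k : ℕ) (f : ℝ → ℝ) :
    W p (k+1) f = W p k (fun x => (f (p * x) + f ((1 - p) * x)) / 2) := by
  unfold W
  rw [← (Fin.consEquiv (fun _ : Fin (k+1) => Bool)).sum_comp, Fintype.sum_prod_type]
  simp only [Fintype.sum_bool, wt, Fin.consEquiv, Equiv.coe_fn_mk, Fin.prod_univ_succ,
    Fin.cons_zero, Fin.cons_succ]
  rw [← Finset.sum_add_distrib, Finset.sum_div, Finset.sum_div]
  refine Finset.sum_congr rfl fun r _ => ?_
  simp only [if_true, Bool.false_eq_true, if_false]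
  rw [pow_succ]
  field_simp

lemma W_symm (p : ℝ) (k : ℕ) (f : ℝ → ℝ) : W p k f = W (1 - p) k f := by
  induction k generalizing f with
  | zero => simp [W, wt]
  | succ k ih =>
    rw [W_succ, W_succ, ih]
    congr 1
    funext x
    rw [sub_sub_cancel, add_comm]

lemma wt_nonneg {p : ℝ} (hp : 0 < p) (hp1 : p < 1) {k : ℕ} (r : Fin k → Bool) : 0 ≤ wt p r := by
  unfold wt
  refine Finset.prod_nonneg fun j _ => ?_
  split_ifs <;> linarith

lemma wt_sum (p : ℝ) (k : ℕ) : ∑ r : Fin k → Bool, wt p r = 1 := by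
  have h : ∀ k (c : ℝ), W p k (fun x => c * x) = c / 2 ^ k := by
    intro k
    induction k with
    | zero => intro c; simp [W, wt]
    | succ k ih =>
      intro c
      rw [W_succ]
      have : (fun x : ℝ => (c * (p * x) + c * ((1 - p) * x)) / 2) = fun x => (c / 2) * x := by
        funext x; ring
      rw [this, ih]; field_simp; ring
  have h2 := h k 1
  unfold W at h2
  have : (2 : ℝ) ^ k ≠ 0 := by positivity
  field_simp at h2
  simpa using h2

/-- restriction of the outcome to finitely many bits -/
def R (n k : ℕ) (ω : ℕ → ℕ → Bool) : Fin n → Fin k → Bool := fun i j => ω i j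

lemma R_meas (n k : ℕ) : Measurable (R n k) := by
  unfold R; fun_prop

lemma R_prob {p : ℝ} (hp : 0 < p) (hp1 : p < 1) {ν : Measure (ℕ → ℕ → Bool)} (hν : IIDBits p ν)
    (n k : ℕ) (v : Fin n → Fin k → Bool) :
    ν.real {ω | R n k ω = v} = ∏ i, wt p (v i) := by
  classical
  have h := hν.2 (Finset.range n ×ˢ Finset.range k)
    (fun s => if h : s.1 < n ∧ s.2 < k then v ⟨s.1, h.1⟩ ⟨s.2, h.2⟩ else false)
  have hs : {ω : ℕ → ℕ → Bool | R n k ω = v} = {ω | ∀ s ∈ Finset.range n ×ˢ Finset.range k,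
      ω s.1 s.2 = (fun s : ℕ × ℕ => if h : s.1 < n ∧ s.2 < k then v ⟨s.1, h.1⟩ ⟨s.2, h.2⟩ else false) s} := by
    ext ω
    simp only [Set.mem_ofPred_eq, Finset.mem_product, Finset.mem_range, R]
    constructor
    · rintro h ⟨i, j⟩ hij
      have := congrFun (congrFun h ⟨i, hij.1⟩) ⟨j, hij.2⟩
      simp only [hij.1, hij.2]
      simpa [R] using this
    · intro h
      funext i j
      have := h (i, j) ⟨i.2, j.2⟩
      simpa [R] using this
  rw [Measure.real, hs, h, ENNReal.toReal_prod, Finset.prod_product, Finset.prod_range]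
  refine Finset.prod_congr rfl fun i _ => ?_
  rw [Finset.prod_range, wt]
  refine Finset.prod_congr rfl fun j _ => ?_
  rw [ENNReal.toReal_ofReal]
  · simp
  · split_ifs <;> linarith

lemma R_int {p : ℝ} (hp : 0 < p) (hp1 : p < 1) {ν : Measure (ℕ → ℕ → Bool)} (hν : IIDBits p ν)
    (n k : ℕ) (F : (Fin n → Fin k → Bool) → ℝ) :
    Integrable (fun ω => F (R n k ω)) ν ∧
    ∫ ω, F (R n k ω) ∂ν = Ex (wt p) n F := by
  have := hν.1
  have : IsProbabilityMeasure (ν.map (R n k)) :=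
    Measure.isProbabilityMeasure_map (R_meas n k).aemeasurable
  have hF : Measurable F := measurable_of_finite F
  have hi : Integrable F (ν.map (R n k)) := Integrable.of_finite
  constructor
  · exact hi.comp_measurable (R_meas n k)
  · rw [← integral_map (R_meas n k).aemeasurable hF.aestronglyMeasurable, integral_fintype hi]
    unfold Ex
    refine Finset.sum_congr rfl fun v _ => ?_
    rw [map_measureReal_apply (R_meas n k) (measurableSet_singleton v), ← R_prob hp hp1 hν]
    rfl

lemma prefCount_eq (ω : ℕ → ℕ → Bool) (n k : ℕ) (r : Fin k → Bool) :
    prefCount ω n k r = cnt (R n k ω) r := by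
  unfold prefCount cnt
  rw [Finset.card_filter, Finset.sum_range]
  refine Finset.sum_congr rfl fun i _ => ?_
  congr 1
  simp only [R, funext_iff]

lemma frac_eq (ω : ℕ → ℕ → Bool) (n k : ℕ) :
    fracFilled ω n k = 1 - (∑ r, A1 r (R n k ω)) / 2 ^ k := by
  unfold fracFilled fillCount
  rw [Finset.card_filter]
  have h2 : (2 : ℝ) ^ k ≠ 0 := by positivity
  have : (2 : ℝ) ^ k = ∑ r : Fin k → Bool, 1 := by simp
  rw [eq_sub_iff_add_eq, ← add_div, div_eq_one_iff_eq h2, this]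
  push_cast
  rw [← Finset.sum_add_distrib]
  refine Finset.sum_congr rfl fun r _ => ?_
  rw [prefCount_eq, A1]
  split_ifs <;> first | omega | norm_num

lemma W_eq (p : ℝ) (n k : ℕ) : W p k (G n) = 1 - (∑ r : Fin k → Bool, Ex (wt p) n (A1 r)) / 2 ^ k := by
  unfold W G
  rw [Finset.sum_sub_distrib, sub_div]
  congr 1
  · simp
  · congr 1
    refine Finset.sum_congr rfl fun r _ => ?_
    rw [F1_eq (wt_sum p k)]

lemma frac_int {p : ℝ} (hp : 0 < p) (hp1 : p < 1) {ν : Measure (ℕ → ℕ → Bool)} (hν : IIDBits p ν)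
    (n k : ℕ) : ∫ ω, fracFilled ω n k ∂ν = W p k (G n) := by
  simp_rw [frac_eq]
  rw [(R_int hp hp1 hν n k (fun v => 1 - (∑ r, A1 r v) / 2 ^ k)).2, W_eq, Ex_sub,
    Ex_one (wt_sum p k)]
  simp_rw [div_eq_inv_mul]
  rw [Ex_mul, Ex_sum]

lemma cheb {p : ℝ} (hp : 0 < p) (hp1 : p < 1) {ν : Measure (ℕ → ℕ → Bool)} (hν : IIDBits p ν)
    (n k : ℕ) {δ : ℝ} (hδ : 0 < δ) :
    ν.real {ω | δ ≤ |fracFilled ω n k - W p k (G n)|} ≤ (1 / 2 ^ k) / δ ^ 2 := by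
  set c := ∑ r : Fin k → Bool, Ex (wt p) n (A1 r) with hc
  let F : (Fin n → Fin k → Bool) → ℝ := fun v => ((∑ r, A1 r v - c) / 2 ^ k) ^ 2
  have hF : ∀ ω, F (R n k ω) = |fracFilled ω n k - W p k (G n)| ^ 2 := by
    intro ω
    rw [W_eq, frac_eq, sq_abs]
    simp only [F, hc]; ring
  have hset : {ω | δ ≤ |fracFilled ω n k - W p k (G n)|} = {ω | δ ^ 2 ≤ F (R n k ω)} := by
    ext ω
    simp only [Set.mem_ofPred_eq, hF]
    rw [sq_le_sq₀ hδ.le (abs_nonneg _)]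
  have h1 := mul_meas_ge_le_integral_of_nonneg (μ := ν) (f := fun ω => F (R n k ω))
    (Filter.Eventually.of_forall fun ω => by simp only [F]; positivity)
    (R_int hp hp1 hν n k F).1 (δ ^ 2)
  rw [(R_int hp hp1 hν n k F).2] at h1
  have h2 : Ex (wt p) n F ≤ 1 / 2 ^ k := by
    have e : F = fun v => ((1 / 2 ^ k) ^ 2) * ((∑ r, A1 r v) ^ 2 - (2 * c * (∑ r, A1 r v) - c ^ 2 * 1)) := by
      funext v; simp only [F]; ring
    rw [e, Ex_mul, Ex_sub, Ex_sub, Ex_mul, Ex_mul, Ex_one (wt_sum p k), Ex_sum]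
    have := var_bound (wt_nonneg hp hp1) (wt_sum p k) n
    simp only [Fintype.card_fun, Fintype.card_bool, Fintype.card_fin] at this
    rw [← hc] at this ⊢
    push_cast at this
    calc _ ≤ ((1 / 2 ^ k) ^ 2 : ℝ) * 2 ^ k := by
          refine mul_le_mul_of_nonneg_left ?_ (by positivity)
          nlinarith
      _ = 1 / 2 ^ k := by field_simp
  rw [hset, le_div_iff₀ (by positivity), mul_comm]
  exact h1.trans h2

lemma frac_anti_succ (ω : ℕ → ℕ → Bool) (n k : ℕ) :
    fracFilled ω n (k+1) ≤ fracFilled ω n k := by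
  unfold fracFilled
  have h : fillCount ω n (k+1) ≤ 2 * fillCount ω n k := by
    unfold fillCount
    have : (Finset.univ.filter fun r : Fin (k+1) → Bool => 2 ≤ prefCount ω n (k+1) r).card ≤
        ((Finset.univ : Finset Bool) ×ˢ
          (Finset.univ.filter fun r : Fin k → Bool => 2 ≤ prefCount ω n k r)).card := by
      refine Finset.card_le_card_of_injOn (fun r => (r (Fin.last k), fun j => r j.castSucc)) ?_ ?_
      · intro r hr
        simp only [Finset.coe_filter, Finset.mem_univ, true_and, Set.mem_ofPred_eq] at hr
        simp only [Finset.coe_product, Set.mem_prod, Finset.coe_univ, Set.mem_univ, true_and,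
          Finset.coe_filter, Finset.mem_univ, Set.mem_ofPred_eq]
        refine hr.trans (Finset.card_le_card ?_)
        intro i hi
        simp only [Finset.mem_filter] at hi ⊢
        exact ⟨hi.1, fun j => by simpa using hi.2 j.castSucc⟩
      · intro r _ s _ hrs
        simp only [Prod.mk.injEq] at hrs
        funext j
        refine Fin.lastCases hrs.1 (fun i => congrFun hrs.2 i) j
    simpa [Finset.card_product] using this
  rw [pow_succ, div_le_div_iff₀ (by positivity) (by positivity)]
  have h' : (fillCount ω n (k+1) : ℝ) ≤ 2 * fillCount ω n k := by exact_mod_cast h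
  have : (0 : ℝ) < 2 ^ k := by positivity
  nlinarith

lemma frac_anti (ω : ℕ → ℕ → Bool) (n : ℕ) : Antitone (fracFilled ω n) :=
  antitone_nat_of_succ_le (frac_anti_succ ω n)

lemma level_two {ω : ℕ → ℕ → Bool} {n k : ℕ} {α : ℝ}
    (h1 : α ≤ fracFilled ω n k) (h2 : fracFilled ω n (k+2) < α) :
    fillupLevel α ω n = k ∨ fillupLevel α ω n = k + 1 := by
  have hub : ∀ j ∈ {k | α ≤ fracFilled ω n k}, j ≤ k + 1 := by
    intro j hj
    by_contra hcon
    have : fracFilled ω n j ≤ fracFilled ω n (k+2) := frac_anti ω n (by omega)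
    simp only [Set.mem_ofPred_eq] at hj
    linarith
  have hle : fillupLevel α ω n ≤ k + 1 := csSup_le ⟨k, h1⟩ hub
  have hge : k ≤ fillupLevel α ω n := le_csSup ⟨k+1, hub⟩ h1
  omega

lemma W_anti_succ (p : ℝ) (hp : 0 < p) (hp1 : p < 1) {ν : Measure (ℕ → ℕ → Bool)} (hν : IIDBits p ν)
    (n k : ℕ) : W p (k+1) (G n) ≤ W p k (G n) := by
  rw [← frac_int hp hp1 hν, ← frac_int hp hp1 hν]
  have hi : ∀ k, Integrable (fun ω => fracFilled ω n k) ν := by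
    intro k
    simp_rw [frac_eq]
    exact (R_int hp hp1 hν n k (fun v => 1 - (∑ r, A1 r v) / 2 ^ k)).1
  exact integral_mono (hi _) (hi _) fun ω => frac_anti_succ ω n k
end Fill

namespace Fill

lemma G_le {n : ℕ} {x : ℝ} (h0 : 0 ≤ x) (h1 : x ≤ 1) : G n x ≤ n * x := by
  have h := one_add_mul_le_pow (show (-2 : ℝ) ≤ -x by linarith) n
  have h2 : 0 ≤ n * x * (1 - x) ^ (n - 1) := by
    have : 0 ≤ 1 - x := by linarith
    positivity
  have e : (1 : ℝ) + -x = 1 - x := by ring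
  rw [e] at h
  unfold G
  linarith

lemma G_le_one {n : ℕ} {x : ℝ} (h0 : 0 ≤ x) (h1 : x ≤ 1) : G n x ≤ 1 := by
  have : 0 ≤ 1 - x := by linarith
  have h2 : 0 ≤ (1 - x) ^ n + n * x * (1 - x) ^ (n - 1) := by positivity
  unfold G; linarith

lemma G_ge {n : ℕ} {x : ℝ} (hn : 2 ≤ n) (h0 : 0 < x) (h1 : x ≤ 1) : 1 - G n x ≤ 8 / (n * x) := by
  have hx : 0 ≤ 1 - x := by linarith
  have hn' : (2 : ℝ) ≤ n := by exact_mod_cast hn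
  have ht : 0 < n * x := by positivity
  have e1 : (1 - x) ^ (n - 1) ≤ Real.exp (-(n * x / 2)) := by
    calc (1 - x) ^ (n - 1) ≤ (Real.exp (-x)) ^ (n - 1) := by
          gcongr
          have := Real.add_one_le_exp (-x); linarith
      _ = Real.exp (-((n - 1 : ℕ) * x)) := by rw [← Real.exp_nat_mul]; ring_nf
      _ ≤ _ := by
          apply Real.exp_le_exp.2
          rw [Nat.cast_sub (by omega)]
          push_cast
          nlinarith
  have e2 : (1 - x) ^ n ≤ (1 - x) ^ (n - 1) := pow_le_pow_of_le_one hx (by linarith) (by omega)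
  have e3 : 1 - G n x ≤ (1 + n * x) * Real.exp (-(n * x / 2)) := by
    unfold G
    have := mul_le_mul_of_nonneg_left e1 ht.le
    linarith
  refine e3.trans ?_
  have e4 := Real.quadratic_le_exp_of_nonneg (show 0 ≤ n * x / 2 by positivity)
  rw [Real.exp_neg, ← div_eq_mul_inv, div_le_div_iff₀ (Real.exp_pos _) ht]
  nlinarith

lemma G_hasDeriv (N : ℕ) (x : ℝ) :
    HasDerivAt (G (N+2)) ((N + 2 : ℝ) * (N + 1) * x * (1 - x) ^ N) x := by
  unfold G
  have h1 : HasDerivAt (fun x : ℝ => 1 - x) (-1) x := by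
    simpa using (hasDerivAt_id x).const_sub 1
  have h2 := h1.pow (N+2)
  have h3 := h1.pow (N+1)
  have h4 := ((hasDerivAt_id x).const_mul ((N + 2 : ℕ) : ℝ)).mul h3
  have h5 := (h2.add h4).const_sub 1
  refine HasDerivAt.congr_deriv h5 ?_
  simp only [Pi.pow_apply, show N + 2 - 1 = N + 1 from rfl, Nat.add_sub_cancel, id]
  push_cast
  ring

lemma G_lower {N : ℕ} {x y : ℝ} (hy : 0 ≤ y) (hxy : y ≤ x) (hx : x ≤ 1) :
    ((N + 2 : ℝ) * (N + 1) * y * (1 - x) ^ N) * (x - y) ≤ G (N+2) x - G (N+2) y := by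
  refine Convex.mul_sub_le_image_sub_of_le_deriv (convex_Icc y x)
    (fun z _ => (G_hasDeriv N z).continuousAt.continuousWithinAt)
    (fun z _ => (G_hasDeriv N z).differentiableAt.differentiableWithinAt) ?_ y (Set.left_mem_Icc.2 hxy) x
    (Set.right_mem_Icc.2 hxy) hxy
  intro z hz
  rw [interior_Icc] at hz
  rw [(G_hasDeriv N z).deriv]
  have a1 := hz.1
  have a2 := hz.2
  have : 0 ≤ 1 - x := by linarith
  have : 0 ≤ 1 - z := by linarith
  have : 0 ≤ z := by linarith
  gcongr

lemma G_mono {n : ℕ} (hn : 2 ≤ n) {x y : ℝ} (hy : 0 ≤ y) (hxy : y ≤ x) (hx : x ≤ 1) :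
    G n y ≤ G n x := by
  obtain ⟨N, rfl⟩ := Nat.exists_eq_add_of_le' hn
  have h := G_lower (N := N) hy hxy hx
  have : 0 ≤ 1 - x := by linarith
  have h2 : 0 ≤ ((N + 2 : ℝ) * (N + 1) * y * (1 - x) ^ N) * (x - y) :=
    mul_nonneg (by positivity) (by linarith)
  linarith

/-- one-step decrement -/
noncomputable def dec (p : ℝ) (n : ℕ) (x : ℝ) : ℝ :=
  G n x - (G n (p * x) + G n ((1 - p) * x)) / 2

lemma dec_nonneg {p : ℝ} (hp : 0 < p) (hp1 : p < 1) {n : ℕ} (hn : 2 ≤ n) {x : ℝ} (hx0 : 0 ≤ x)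
    (hx : x ≤ 1) : 0 ≤ dec p n x := by
  have h1 := G_mono hn (show 0 ≤ p * x by positivity) (by nlinarith) hx
  have h2 := G_mono hn (show 0 ≤ (1-p) * x from mul_nonneg (by linarith) hx0) (by nlinarith) hx
  unfold dec; linarith

lemma dec_lower {p : ℝ} (hp : 0 < p) (hp1 : p < 1) {n : ℕ} (hn : 2 ≤ n) {x t T : ℝ} (ht : 0 < t)
    (hx1 : t ≤ n * x) (hx2 : n * x ≤ T) (hT : 2 * T ≤ n) :
    p * (1 - p) * t ^ 2 * Real.exp (-2 * T) / 4 ≤ dec p n x := by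
  have hn' : (2 : ℝ) ≤ n := by exact_mod_cast hn
  have hn0 : (0 : ℝ) < n := by linarith
  have hx0 : 0 < x := by
    by_contra h
    have := mul_nonpos_of_nonneg_of_nonpos hn0.le (not_lt.1 h)
    linarith
  have hx : x ≤ 1 / 2 := by
    have : n * x ≤ n * (1 / 2) := by linarith
    exact le_of_mul_le_mul_left this hn0
  have h1 := G_mono hn (show 0 ≤ p * x by positivity) (by nlinarith) (show x ≤ 1 by linarith)
  have hq : 0 < 1 - p := by linarith
  have hpow : Real.exp (-2 * T) ≤ (1 - x) ^ n := by
    have e : Real.exp (-2 * x) ≤ 1 - x := by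
      have := Real.add_one_le_exp (2 * x)
      rw [neg_mul, Real.exp_neg, inv_le_comm₀ (Real.exp_pos _) (by linarith)]
      refine le_trans ?_ this
      rw [inv_le_iff_one_le_mul₀ (by linarith)]
      nlinarith
    calc Real.exp (-2 * T) ≤ Real.exp (n * (-2 * x)) := by
          apply Real.exp_le_exp.2; linarith
      _ = (Real.exp (-2 * x)) ^ n := by rw [Real.exp_nat_mul]
      _ ≤ _ := by gcongr
  obtain ⟨N, rfl⟩ := Nat.exists_eq_add_of_le' hn
  have h2 := G_lower (N := N) (show 0 ≤ (1-p) * x by positivity) (show (1 - p) * x ≤ x by nlinarith)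
    (show x ≤ 1 by linarith)
  have hpow2 : (1 - x) ^ (N + 2) ≤ (1 - x) ^ N :=
    pow_le_pow_of_le_one (by linarith) (by linarith) (by omega)
  have h3 : p * (1 - p) * t ^ 2 * Real.exp (-2 * T) / 2 ≤
      ((N + 2 : ℝ) * (N + 1) * ((1-p) * x) * (1 - x) ^ N) * (x - (1-p) * x) := by
    push_cast at *
    have k1 : t ^ 2 / 2 ≤ (N + 2 : ℝ) * (N + 1) * x ^ 2 := by
      have : t ^ 2 ≤ ((N + 2 : ℝ) * x) ^ 2 := by gcongr
      have hN : (0 : ℝ) ≤ N := by positivity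
      have : ((N + 2 : ℝ) * x) ^ 2 ≤ 2 * ((N + 2 : ℝ) * (N + 1) * x ^ 2) := by
        have : 0 ≤ (N + 2 : ℝ) * N * x ^ 2 := by positivity
        nlinarith
      linarith
    calc p * (1 - p) * t ^ 2 * Real.exp (-2 * T) / 2
        = p * (1 - p) * ((t ^ 2 / 2) * Real.exp (-2 * T)) := by ring
      _ ≤ p * (1 - p) * (((N + 2 : ℝ) * (N + 1) * x ^ 2) * (1 - x) ^ N) := by
          have := hpow.trans hpow2
          gcongr
      _ = _ := by ring
  unfold dec
  linarith

lemma W_dec (p : ℝ) (n k : ℕ) : W p k (G n) - W p (k+1) (G n) = W p k (dec p n) := by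
  rw [W_succ]
  unfold W dec
  rw [← sub_div, ← Finset.sum_sub_distrib]
end Fill

namespace Fill

/-- standard normal distribution function -/
noncomputable def Phi (x : ℝ) : ℝ := cdf (gaussianReal 0 1) x
/-- standard normal density -/
noncomputable def phi (x : ℝ) : ℝ := (√(2 * π))⁻¹ * Real.exp (-(x ^ 2 / 2))

lemma phi_eq : gaussianPDFReal 0 1 = phi := by
  funext x
  simp [gaussianPDFReal, phi, neg_div]

lemma phi_cont : Continuous phi := by unfold phi; fun_prop

lemma phi_pos (x : ℝ) : 0 < phi x := by unfold phi; positivity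

lemma phi_le (x : ℝ) : phi x ≤ 1 := by
  unfold phi
  have h1 : (√(2 * π))⁻¹ ≤ 1 := by
    apply inv_le_one_of_one_le₀
    rw [Real.one_le_sqrt]
    have := Real.pi_gt_three; linarith
  have h2 : Real.exp (-(x ^ 2 / 2)) ≤ 1 := by
    rw [Real.exp_le_one_iff]
    have := sq_nonneg x; linarith
  have := Real.exp_pos (-(x ^ 2 / 2))
  nlinarith

lemma phi_deriv (x : ℝ) : HasDerivAt phi (-x * phi x) x := by
  unfold phi
  have h := ((((hasDerivAt_id x).pow 2).div_const 2).neg.exp).const_mul (√(2 * π))⁻¹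
  refine HasDerivAt.congr_deriv h ?_
  simp only [Pi.neg_apply, Pi.pow_apply, id]
  push_cast
  ring

lemma phi_deriv_bound (x : ℝ) : ‖-x * phi x‖ ≤ 1 := by
  rw [norm_mul, norm_neg, Real.norm_eq_abs, Real.norm_eq_abs, abs_of_pos (phi_pos x)]
  unfold phi
  have h1 : (√(2 * π))⁻¹ ≤ 1 := by
    apply inv_le_one_of_one_le₀
    rw [Real.one_le_sqrt]
    have := Real.pi_gt_three; linarith
  have h2 : |x| * Real.exp (-(x ^ 2 / 2)) ≤ 1 := by
    rw [Real.exp_neg, ← div_eq_mul_inv, div_le_one (Real.exp_pos _)]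
    have := Real.add_one_le_exp (x ^ 2 / 2)
    have h3 := sq_nonneg (|x| - 1)
    have h4 := sq_abs x
    nlinarith
  have h3 : 0 ≤ |x| * Real.exp (-(x ^ 2 / 2)) := by positivity
  calc |x| * ((√(2 * π))⁻¹ * rexp (-(x ^ 2 / 2))) = (√(2 * π))⁻¹ * (|x| * rexp (-(x ^ 2 / 2))) := by ring
    _ ≤ 1 * 1 := by gcongr
    _ = 1 := by ring

lemma phi_lip (x y : ℝ) : |phi x - phi y| ≤ |x - y| := by
  have := convex_univ.norm_image_sub_le_of_norm_hasDerivWithin_le (f := phi)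
    (f' := fun x => -x * phi x) (C := 1) (s := Set.univ)
    (fun z _ => (phi_deriv z).hasDerivWithinAt) (fun z _ => phi_deriv_bound z)
    (Set.mem_univ y) (Set.mem_univ x)
  simpa using this

lemma Phi_sub {x y : ℝ} (h : x ≤ y) : Phi y - Phi x = ∫ t in x..y, phi t := by
  unfold Phi
  rw [cdf_eq_real, cdf_eq_real, ← measureReal_sdiff (Set.Iic_subset_Iic.2 h) measurableSet_Iic,
    intervalIntegral.integral_of_le h, Set.Iic_sdiff_Iic, Measure.real,
    gaussianReal_apply_eq_integral 0 one_ne_zero, phi_eq, ENNReal.toReal_ofReal]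
  exact setIntegral_nonneg measurableSet_Ioc fun t _ => (phi_pos t).le

lemma Phi_deriv (x : ℝ) : HasDerivAt Phi (phi x) x := by
  have h : HasDerivAt (fun y => ∫ t in (x-1)..y, phi t) (phi x) x :=
    intervalIntegral.integral_hasDerivAt_right (phi_cont.intervalIntegrable _ _)
      (phi_cont.stronglyMeasurableAtFilter _ _) phi_cont.continuousAt
  have h2 := h.const_add (Phi (x-1))
  refine h2.congr_of_eventuallyEq ?_
  filter_upwards [lt_mem_nhds (show x - 1 < x by linarith)] with y hy
  rw [← Phi_sub hy.le]; ring

lemma Phi_neg (x : ℝ) : Phi (-x) = 1 - Phi x := by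
  have hm : (gaussianReal 0 1).map (fun x ↦ -x) = gaussianReal 0 1 := by
    rw [gaussianReal_map_neg]; simp
  have : NullSingletonClass (gaussianReal 0 1) := nullSingletonClass_gaussianReal one_ne_zero
  unfold Phi
  rw [cdf_eq_real, cdf_eq_real]
  have h1 : (gaussianReal 0 1).real (Set.Iic (-x)) = (gaussianReal 0 1).real (Set.Ici x) := by
    conv_lhs => rw [← hm]
    rw [map_measureReal_apply measurable_neg measurableSet_Iic]
    congr 1
    ext y; simp
  rw [h1, ← probReal_compl_eq_one_sub measurableSet_Iic, Set.compl_Iic, Measure.real, Measure.real,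
    Ioi_ae_eq_Ici.measure_eq]

lemma Phi_zero : Phi 0 = 1 / 2 := by
  have := Phi_neg 0
  rw [neg_zero] at this; linarith

lemma Phi_lip (x y : ℝ) : |Phi x - Phi y| ≤ |x - y| := by
  have := convex_univ.norm_image_sub_le_of_norm_hasDerivWithin_le (f := Phi)
    (f' := phi) (C := 1) (s := Set.univ)
    (fun z _ => (Phi_deriv z).hasDerivWithinAt)
    (fun z _ => by rw [Real.norm_eq_abs, abs_of_pos (phi_pos z)]; exact phi_le z)
    (Set.mem_univ y) (Set.mem_univ x)
  simpa using this

/-- one-step comparison: `c` is either endpoint of the interval. -/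
lemma Phi_step (x h c : ℝ) (hh : 0 ≤ h) (hc1 : x ≤ c) (hc2 : c ≤ x + h) :
    |h * phi c - (Phi (x + h) - Phi x)| ≤ h ^ 2 := by
  have := (convex_Icc x (x+h)).norm_image_sub_le_of_norm_hasDerivWithin_le
    (f := fun z => Phi z - z * phi c)
    (f' := fun z => phi z - 1 * phi c) (C := h) (x := x) (y := x + h)
    (fun z _ => ((Phi_deriv z).sub ((hasDerivAt_id z).mul_const _)).hasDerivWithinAt)
    (fun z hz => by
      rw [Real.norm_eq_abs, one_mul]
      refine (phi_lip z c).trans ?_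
      rw [abs_le]; constructor <;> linarith [hz.1, hz.2])
    (Set.left_mem_Icc.2 (by linarith)) (Set.right_mem_Icc.2 (by linarith))
  rw [Real.norm_eq_abs, Real.norm_eq_abs, show x + h - x = h by ring, abs_of_nonneg hh] at this
  rw [abs_sub_comm, sq]
  convert this using 2
  ring

lemma Phi_gap (x : ℝ) : ∃ c > 0, ∀ z, 0 ≤ z → z ≤ 1 →
    c * z ≤ Phi x - Phi (x - z) ∧ c * z ≤ Phi (x + z) - Phi x := by
  refine ⟨phi (|x| + 1), phi_pos _, ?_⟩
  have hb : ∀ y ∈ Set.Icc (x-1) (x+1), phi (|x| + 1) ≤ phi y := by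
    intro y hy
    unfold phi
    have : y ^ 2 ≤ (|x| + 1) ^ 2 := by
      rw [sq_le_sq]
      rw [abs_of_nonneg (show 0 ≤ |x| + 1 by positivity), abs_le]
      have := le_abs_self x
      have := neg_abs_le x
      constructor <;> linarith [hy.1, hy.2]
    gcongr
  have key : ∀ y ∈ Set.Icc (x-1) (x+1), ∀ z ∈ Set.Icc (x-1) (x+1), y ≤ z →
      phi (|x| + 1) * (z - y) ≤ Phi z - Phi y := by
    refine Convex.mul_sub_le_image_sub_of_le_deriv (convex_Icc _ _)
      (fun z _ => (Phi_deriv z).continuousAt.continuousWithinAt)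
      (fun z _ => (Phi_deriv z).differentiableAt.differentiableWithinAt) ?_
    intro z hz
    rw [(Phi_deriv z).deriv]
    exact hb z (interior_subset hz)
  intro z h0 h1
  constructor
  · have := key (x - z) ⟨by linarith, by linarith⟩ x ⟨by linarith, by linarith⟩ (by linarith)
    rwa [sub_sub_cancel] at this
  · have := key x ⟨by linarith, by linarith⟩ (x + z) ⟨by linarith, by linarith⟩ (by linarith)
    rwa [add_sub_cancel_left] at this
end Fill

namespace Fill

/-- binomial(2m,1/2) mass at `m + j` -/
noncomputable def Bm (m j : ℕ) : ℝ := ((2 * m).choose (m + j) : ℝ) / 4 ^ m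

lemma Bm_pos {m j : ℕ} (h : j ≤ m) : 0 < Bm m j := by
  unfold Bm
  have : 0 < (2 * m).choose (m + j) := Nat.choose_pos (by omega)
  positivity

lemma Bm_succ {m j : ℕ} (h : j ≤ m) : Bm m (j+1) * (m + j + 1) = Bm m j * (m - j) := by
  unfold Bm
  have h1 := Nat.choose_succ_right_eq (2 * m) (m + j)
  have h2 : 2 * m - (m + j) = m - j := by omega
  rw [h2] at h1
  have h3 : (((2 * m).choose (m + j + 1) : ℕ) : ℝ) * (m + j + 1) = ((2 * m).choose (m + j)) * (m - j) := by
    rw [← Nat.cast_sub h]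
    exact_mod_cast h1
  rw [← add_assoc]
  field_simp
  linarith

lemma Bm_upper {m J : ℕ} (hJ : J ≤ m) (j : ℕ) (h : j ≤ J) :
    Bm m j ≤ Bm m 0 * Real.exp (-((j : ℝ) ^ 2 / (m + J))) := by
  induction j with
  | zero => simp
  | succ j ih =>
    have ih := ih (by omega)
    have hs := Bm_succ (show j ≤ m by omega)
    have hj : (j : ℝ) + 1 ≤ J := by exact_mod_cast h
    have hm : (J : ℝ) ≤ m := by exact_mod_cast hJ
    have hj0 : (0 : ℝ) ≤ j := by positivity
    have hpos : (0 : ℝ) < m + j + 1 := by positivity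
    have e1 : Bm m (j+1) = Bm m j * (1 - (2 * j + 1) / (m + j + 1)) := by
      field_simp; linarith
    have e2 : (1 - (2 * j + 1) / (m + j + 1) : ℝ) ≤ Real.exp (-((2 * j + 1) / (m + J))) := by
      have := Real.add_one_le_exp (-((2 * j + 1) / (m + J) : ℝ))
      have h3 : ((2 * j + 1) / (m + J) : ℝ) ≤ (2 * j + 1) / (m + j + 1) := by
        apply div_le_div_of_nonneg_left <;> linarith
      linarith
    rw [e1]
    calc Bm m j * (1 - (2 * j + 1) / (m + j + 1)) ≤
        Bm m j * Real.exp (-((2 * j + 1) / (m + J))) :=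
          mul_le_mul_of_nonneg_left e2 (Bm_pos (by omega)).le
      _ ≤ (Bm m 0 * Real.exp (-((j : ℝ) ^ 2 / (m + J)))) * Real.exp (-((2 * j + 1) / (m + J))) := by
          gcongr
      _ = _ := by
          rw [mul_assoc, ← Real.exp_add]
          congr 2; push_cast; ring

lemma Bm_lower {m J : ℕ} (hJ : J < m) (j : ℕ) (h : j ≤ J) :
    Bm m 0 * Real.exp (-((j : ℝ) ^ 2 / (m - J))) ≤ Bm m j := by
  induction j with
  | zero => simp
  | succ j ih =>
    have ih := ih (by omega)
    have hs := Bm_succ (show j ≤ m by omega)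
    have hj : (j : ℝ) + 1 ≤ J := by exact_mod_cast h
    have hm : (J : ℝ) + 1 ≤ m := by exact_mod_cast hJ
    have hj0 : (0 : ℝ) ≤ j := by positivity
    have hpos : (0 : ℝ) < m + j + 1 := by positivity
    have hpos2 : (0 : ℝ) < m - j := by linarith
    have hpos3 : (0 : ℝ) < m - J := by linarith
    have e1 : Bm m (j+1) = Bm m j * ((m - j) / (m + j + 1)) := by
      field_simp; linarith
    have e2 : Real.exp (-((2 * j + 1) / (m - J))) ≤ ((m - j) / (m + j + 1) : ℝ) := by
      rw [Real.exp_neg, inv_le_comm₀ (Real.exp_pos _) (by positivity), inv_div]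
      have := Real.add_one_le_exp (((2 * j + 1) / (m - J) : ℝ))
      have h3 : ((2 * j + 1) / (m - j) : ℝ) ≤ (2 * j + 1) / (m - J) := by
        gcongr; linarith
      have h4 : ((m + j + 1) / (m - j) : ℝ) = (2 * j + 1) / (m - j) + 1 := by
        field_simp; ring
      linarith
    rw [e1]
    calc _ = (Bm m 0 * Real.exp (-((j : ℝ) ^ 2 / (m - J)))) * Real.exp (-((2 * j + 1) / (m - J))) := by
          rw [mul_assoc, ← Real.exp_add]
          congr 2; push_cast; ring
      _ ≤ Bm m j * Real.exp (-((2 * j + 1) / (m - J))) := by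
          gcongr
      _ ≤ Bm m j * ((m - j) / (m + j + 1)) :=
          mul_le_mul_of_nonneg_left e2 (Bm_pos (by omega)).le

lemma Bm_zero_wallis (m : ℕ) : Bm m 0 ^ 2 * (2 * m + 1) * Real.Wallis.W m = 1 := by
  rw [Real.Wallis.W_eq_factorial_ratio]
  unfold Bm
  have h : ((2 * m).choose (m + 0) : ℝ) = (Nat.factorial (2 * m)) / (Nat.factorial m) ^ 2 := by
    rw [add_zero, Nat.cast_choose ℝ (show m ≤ 2 * m by omega), show 2 * m - m = m by omega, sq]
  rw [h]
  have e : (2 : ℝ) ^ (4 * m) = (4 ^ m) ^ 2 := by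
    rw [← pow_mul, mul_comm m 2, pow_mul, pow_mul]; norm_num
  rw [e]
  have := Nat.factorial_ne_zero m
  have := Nat.factorial_ne_zero (2 * m)
  field_simp

lemma Bm_zero {m : ℕ} (hm : 1 ≤ m) :
    Bm m 0 ≤ 1 / √(π * m) ∧ 1 / √(π * m) - 1 / m ≤ Bm m 0 ∧ 1 / (4 * √m) ≤ Bm m 0 := by
  have hW := Bm_zero_wallis m
  have h1 := Real.Wallis.W_le m
  have h2 := Real.Wallis.le_W m
  have hm' : (1 : ℝ) ≤ m := by exact_mod_cast hm
  have hB := Bm_pos (Nat.zero_le m)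
  set B := Bm m 0
  set w := Real.Wallis.W m
  have hpi := Real.pi_gt_three
  have hpi4 := Real.pi_le_four
  have hs : 0 < √(π * m) := Real.sqrt_pos.2 (by positivity)
  have hsq : √(π * m) ^ 2 = π * m := Real.sq_sqrt (by positivity)
  have hB2 : B ^ 2 * (2 * m + 1) * π ≥ 2 := by
    have : 0 ≤ B ^ 2 * (2 * m + 1) := by positivity
    nlinarith
  have hB3 : B ^ 2 * (2 * m + 1) ^ 2 * π ≤ 4 * (m + 1) := by
    have h3 : (2 * m + 1 : ℝ) * π ≤ w * (4 * m + 4) := by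
      rw [div_mul_div_comm, div_le_iff₀ (by positivity)] at h2
      nlinarith
    have : 0 ≤ B ^ 2 * (2 * m + 1) := by positivity
    calc B ^ 2 * (2 * m + 1) ^ 2 * π = (B ^ 2 * (2 * m + 1)) * ((2 * m + 1) * π) := by ring
      _ ≤ (B ^ 2 * (2 * m + 1)) * (w * (4 * m + 4)) := by gcongr
      _ = (B ^ 2 * (2 * m + 1) * w) * (4 * (m + 1)) := by ring
      _ = 4 * (m + 1) := by rw [hW]; ring
  set z := B * √(π * m) with hz
  have hz0 : 0 < z := by positivity
  have hz2 : z ^ 2 = B ^ 2 * (π * m) := by rw [hz, mul_pow, hsq]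
  have hz1 : z ≤ 1 := by
    have : z ^ 2 ≤ 1 := by
      rw [hz2]
      by_contra hcon
      push Not at hcon
      have h5 : 0 < (2 * m + 1 : ℝ) ^ 2 := by positivity
      have h6 : m * (B ^ 2 * (2 * m + 1) ^ 2 * π) ≤ m * (4 * (m + 1)) := by gcongr
      nlinarith
    nlinarith
  have hz3 : 1 - 1 / (2 * m + 1) ≤ z := by
    have h4 : 1 - 1 / (2 * m + 1 : ℝ) ≤ z ^ 2 := by
      rw [hz2, sub_le_iff_le_add, ← sub_le_iff_le_add', le_div_iff₀ (by positivity)]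
      nlinarith
    nlinarith
  have hBz : B = z * (1 / √(π * m)) := by rw [hz]; field_simp
  have h1s : 1 ≤ √(π * m) := by
    rw [Real.one_le_sqrt]; nlinarith
  have hs1 : 1 / √(π * m) ≤ 1 := by
    rw [div_le_one hs]; exact h1s
  have hs0 : 0 < 1 / √(π * m) := by positivity
  refine ⟨?_, ?_, ?_⟩
  · rw [hBz]; nlinarith
  · rw [hBz]
    have h7 : 1 / (2 * m + 1 : ℝ) ≤ 1 / m := by
      apply one_div_le_one_div_of_le <;> linarith
    have h8 : 0 < 1 / (2 * m + 1 : ℝ) := by positivity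
    have : (1 - z) * (1 / √(π * m)) ≤ (1 / (2 * m + 1)) * 1 := by
      apply mul_le_mul <;> linarith
    linarith
  · have h9 : 1 / (2 * m + 1 : ℝ) ≤ 1 / 3 := by
      apply one_div_le_one_div_of_le <;> linarith
    have h10 : √(π * m) ≤ 2 * √m := by
      rw [Real.sqrt_le_left (by positivity), mul_pow, Real.sq_sqrt (by positivity)]
      nlinarith
    have h11 : 1 / (2 * √m) ≤ 1 / √(π * m) := one_div_le_one_div_of_le hs h10
    have h12 : 1 / (4 * √m) = (1 / 2) * (1 / (2 * √m)) := by
      field_simp; norm_num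
    rw [h12, hBz]
    have h0 : 0 ≤ 1 / (2 * √m) := by positivity
    apply mul_le_mul <;> linarith

lemma Bm_zero_le {m : ℕ} (hm : 1 ≤ m) : Bm m 0 ≤ 1 / √m := by
  refine (Bm_zero hm).1.trans ?_
  have hm' : (1 : ℝ) ≤ m := by exact_mod_cast hm
  apply one_div_le_one_div_of_le (Real.sqrt_pos.2 (by linarith))
  apply Real.sqrt_le_sqrt
  have := Real.pi_gt_three
  nlinarith

lemma exp_neg_sub_le {a b : ℝ} (ha : 0 ≤ a) (hab : a ≤ b) :
    Real.exp (-a) - Real.exp (-b) ≤ b - a := by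
  have h := Real.add_one_le_exp (-(b - a))
  have h2 : Real.exp (-a) ≤ 1 := Real.exp_le_one_iff.2 (by linarith)
  have h3 : Real.exp (-b) = Real.exp (-a) * Real.exp (-(b-a)) := by
    rw [← Real.exp_add]; congr 1; ring
  have h4 := Real.exp_pos (-a)
  rw [h3]
  nlinarith

lemma Bm_local {m j : ℕ} {Y : ℝ} (hm : 1 ≤ m) (hj : (j : ℝ) ≤ Y * √m) (hjm : 2 * j ≤ m) :
    |Bm m j - √(2 / m) * phi (j * √(2 / m))| ≤ (2 * Y ^ 3 + 1) / m := by
  have hm' : (1 : ℝ) ≤ m := by exact_mod_cast hm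
  have hm0 : (0 : ℝ) < m := by linarith
  have hjm' : 2 * (j : ℝ) ≤ m := by exact_mod_cast hjm
  have hj0 : (0 : ℝ) ≤ j := by positivity
  have hsm : 0 < √(m : ℝ) := Real.sqrt_pos.2 hm0
  have hsmsq : √(m : ℝ) ^ 2 = m := Real.sq_sqrt hm0.le
  have e0 : √(2 / m) * phi (j * √(2 / m)) = 1 / √(π * m) * Real.exp (-((j : ℝ) ^ 2 / m)) := by
    unfold phi
    rw [← mul_assoc]
    congr 1
    · rw [← Real.sqrt_inv, ← Real.sqrt_mul (by positivity), one_div, ← Real.sqrt_inv]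
      congr 1
      have := Real.pi_pos
      field_simp
    · congr 2
      rw [mul_pow, Real.sq_sqrt (by positivity)]
      field_simp
  rw [e0]
  have hU := Bm_upper (show j ≤ m by omega) j le_rfl
  have hL := Bm_lower (show j < m by omega) j le_rfl
  obtain ⟨b1, b2, -⟩ := Bm_zero hm
  have b3 := Bm_zero_le hm
  have hB := Bm_pos (Nat.zero_le m)
  set B := Bm m 0
  have hY : 0 ≤ Y := by
    by_contra h
    push Not at h
    nlinarith
  have hj3 : (j : ℝ) ^ 3 ≤ Y ^ 3 * (m * √m) := by
    calc (j : ℝ) ^ 3 ≤ (Y * √m) ^ 3 := by gcongr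
      _ = Y ^ 3 * (√m ^ 2 * √m) := by ring
      _ = _ := by rw [hsmsq]
  have hfrac : 2 * (j : ℝ) ^ 3 / m ^ 2 ≤ 2 * Y ^ 3 / √m := by
    rw [div_le_div_iff₀ (by positivity) hsm]
    calc 2 * (j : ℝ) ^ 3 * √m ≤ 2 * (Y ^ 3 * (m * √m)) * √m := by gcongr
      _ = 2 * Y ^ 3 * (m * √m ^ 2) := by ring
      _ = _ := by rw [hsmsq]; ring
  have hd1 : (j : ℝ) ^ 2 / m - (j : ℝ) ^ 2 / (m + j) ≤ 2 * (j : ℝ) ^ 3 / m ^ 2 := by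
    have : (j : ℝ) ^ 2 / m - (j : ℝ) ^ 2 / (m + j) = (j : ℝ) ^ 3 / (m * (m + j)) := by
      field_simp; ring
    rw [this, div_le_div_iff₀ (by positivity) (by positivity)]
    have : 0 ≤ (j : ℝ) ^ 3 := by positivity
    have : (m : ℝ) ^ 2 ≤ 2 * (m * (m + j)) := by nlinarith
    nlinarith
  have hd2 : (j : ℝ) ^ 2 / (m - j) - (j : ℝ) ^ 2 / m ≤ 2 * (j : ℝ) ^ 3 / m ^ 2 := by
    have hp : (0 : ℝ) < m - j := by linarith
    have : (j : ℝ) ^ 2 / (m - j) - (j : ℝ) ^ 2 / m = (j : ℝ) ^ 3 / (m * (m - j)) := by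
      field_simp; ring
    rw [this, div_le_div_iff₀ (by positivity) (by positivity)]
    have : 0 ≤ (j : ℝ) ^ 3 := by positivity
    have : (m : ℝ) ^ 2 ≤ 2 * (m * (m - j)) := by nlinarith
    nlinarith
  have x1 := exp_neg_sub_le (a := (j : ℝ) ^ 2 / (m + j)) (b := (j : ℝ) ^ 2 / m) (by positivity)
    (by gcongr; linarith)
  have x2 := exp_neg_sub_le (a := (j : ℝ) ^ 2 / m) (b := (j : ℝ) ^ 2 / (m - j)) (by positivity)
    (by gcongr <;> linarith)
  have he : Real.exp (-((j : ℝ) ^ 2 / m)) ≤ 1 := by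
    apply Real.exp_le_one_iff.2
    have : 0 ≤ (j : ℝ) ^ 2 / m := by positivity
    linarith
  have he0 := Real.exp_pos (-((j : ℝ) ^ 2 / m))
  have hm1 : B * (2 * Y ^ 3 / √m) ≤ 2 * Y ^ 3 / m := by
    calc B * (2 * Y ^ 3 / √m) ≤ 1 / √m * (2 * Y ^ 3 / √m) := by gcongr
      _ = 2 * Y ^ 3 / √m ^ 2 := by field_simp
      _ = _ := by rw [hsmsq]
  have hsplit : (2 * Y ^ 3 + 1) / (m : ℝ) = 2 * Y ^ 3 / m + 1 / m := by ring
  rw [hsplit]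
  set E := Real.exp (-((j : ℝ) ^ 2 / m))
  set s := 1 / √(π * m)
  have hmi : 0 < 1 / (m : ℝ) := by positivity
  rw [abs_le]
  constructor
  · have k1 : B * (E - Real.exp (-((j : ℝ) ^ 2 / (m - j)))) ≤ B * (2 * Y ^ 3 / √m) := by
      gcongr; linarith
    have k2 : (s - B) * E ≤ (1 / m) * 1 := by
      apply mul_le_mul <;> linarith
    nlinarith
  · have k1 : B * (Real.exp (-((j : ℝ) ^ 2 / (m + j))) - E) ≤ B * (2 * Y ^ 3 / √m) := by
      gcongr; linarith
    have k2 : 0 ≤ (s - B) * E := mul_nonneg (by linarith) he0.le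
    nlinarith

lemma Bm_low {m j : ℕ} {Y : ℝ} (hm : 1 ≤ m) (hj : (j : ℝ) ≤ Y * √m) (hjm : 2 * j ≤ m) :
    Real.exp (-(2 * Y ^ 2)) / 4 / √m ≤ Bm m j := by
  have hm' : (1 : ℝ) ≤ m := by exact_mod_cast hm
  have hm0 : (0 : ℝ) < m := by linarith
  have hjm' : 2 * (j : ℝ) ≤ m := by exact_mod_cast hjm
  have hsm : 0 < √(m : ℝ) := Real.sqrt_pos.2 hm0
  have hsmsq : √(m : ℝ) ^ 2 = m := Real.sq_sqrt hm0.le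
  have hL := Bm_lower (show j < m by omega) j le_rfl
  refine le_trans ?_ hL
  have h1 := (Bm_zero hm).2.2
  have h2 : (j : ℝ) ^ 2 / (m - j) ≤ 2 * Y ^ 2 := by
    rw [div_le_iff₀ (by linarith)]
    have : (j : ℝ) ^ 2 ≤ Y ^ 2 * m := by
      calc (j : ℝ) ^ 2 ≤ (Y * √m) ^ 2 := by gcongr
        _ = _ := by rw [mul_pow, hsmsq]
    nlinarith [sq_nonneg Y]
  have e : Real.exp (-(2 * Y ^ 2)) / 4 / √m = (1 / (4 * √m)) * Real.exp (-(2 * Y ^ 2)) := by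
    field_simp
  have hB := (Bm_pos (Nat.zero_le m)).le
  rw [e]
  gcongr
end Fill

namespace Fill

/-- upper tail of the binomial(2m,1/2) distribution -/
noncomputable def H (m : ℕ) (i : ℤ) : ℝ :=
  ∑ s ∈ Finset.range (2 * m + 1), if i ≤ (s : ℤ) then ((2 * m).choose s : ℝ) / 4 ^ m else 0

lemma H_step (m t : ℕ) (ht : t ≤ 2 * m) :
    H m t = H m (t + 1) + ((2 * m).choose t : ℝ) / 4 ^ m := by
  unfold H
  have h : ((2 * m).choose t : ℝ) / 4 ^ m =
      ∑ s ∈ Finset.range (2 * m + 1), if t = s then ((2 * m).choose s : ℝ) / 4 ^ m else 0 := by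
    rw [Finset.sum_ite_eq, if_pos (by simp; omega)]
  rw [h, ← Finset.sum_add_distrib]
  apply Finset.sum_congr rfl
  intro s _
  rcases lt_trichotomy t s with h | h | h
  · rw [if_pos (by omega), if_pos (by omega), if_neg (by omega), add_zero]
  · rw [if_pos (by omega), if_neg (by omega), if_pos h, zero_add]
  · rw [if_neg (by omega), if_neg (by omega), if_neg (by omega), add_zero]

lemma sum_choose_four (m : ℕ) :
    ∑ s ∈ Finset.range (2 * m + 1), ((2 * m).choose s : ℝ) / 4 ^ m = 1 := by
  rw [← Finset.sum_div]
  have := Nat.sum_range_choose (2 * m)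
  have h2 : (∑ s ∈ Finset.range (2 * m + 1), ((2 * m).choose s : ℝ)) = 2 ^ (2 * m) := by
    exact_mod_cast this
  rw [h2, pow_mul]; norm_num

lemma H_symm (m : ℕ) : H m m + H m (m + 1) = 1 := by
  rw [← sum_choose_four m]
  have h : H m (m + 1) = ∑ s ∈ Finset.range (2 * m + 1),
      if (s : ℤ) < m then ((2 * m).choose s : ℝ) / 4 ^ m else 0 := by
    unfold H
    rw [← Finset.sum_range_reflect]
    apply Finset.sum_congr rfl
    intro s hs
    rw [Finset.mem_range] at hs
    have e : 2 * m + 1 - 1 - s = 2 * m - s := by omega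
    rw [e, Nat.choose_symm (show s ≤ 2 * m by omega)]
    by_cases h : s < m
    · rw [if_pos (by omega), if_pos (by omega)]
    · rw [if_neg (by omega), if_neg (by omega)]
  rw [h]
  unfold H
  rw [← Finset.sum_add_distrib]
  apply Finset.sum_congr rfl
  intro s _
  by_cases h : s < m
  · rw [if_neg (by omega), if_pos (by omega), zero_add]
  · rw [if_pos (by omega), if_neg (by omega), add_zero]

lemma H_mid (m : ℕ) : |H m m - 1 / 2| = Bm m 0 / 2 := by
  have h1 := H_symm m
  have h2 := H_step m m (by omega)
  have h3 : Bm m 0 = ((2 * m).choose m : ℝ) / 4 ^ m := by unfold Bm; rw [add_zero]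
  rw [← h3] at h2
  have h4 := Bm_pos (Nat.zero_le m)
  rw [show H m m - 1 / 2 = Bm m 0 / 2 by linarith, abs_of_pos (by linarith)]

lemma H_left {m : ℕ} {Y : ℝ} (hm : 1 ≤ m) (J : ℕ) (hJ : (J : ℝ) ≤ Y * √m) (hJm : 2 * J ≤ m) :
    |H m ((m : ℤ) - J) - Phi (J * √(2 / m))| ≤ 1 / √m / 2 + J * ((2 * Y ^ 3 + 3) / m) := by
  induction J with
  | zero =>
    have h1 := H_mid m
    have h2 := Bm_zero_le hm
    simp only [Nat.cast_zero, zero_mul, sub_zero, Phi_zero, add_zero]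
    linarith
  | succ J ih =>
    have hJ' : (J : ℝ) ≤ Y * √m := by push_cast at hJ; linarith
    have ih := ih hJ' (by omega)
    have h1 := H_step m (m - (J + 1)) (by omega)
    have h2 := Bm_local hm hJ hJm
    have hh : √(2 / (m : ℝ)) ^ 2 = 2 / m := Real.sq_sqrt (by positivity)
    have h3 := Phi_step (J * √(2 / m)) (√(2 / m)) ((J + 1 : ℕ) * √(2 / m)) (by positivity)
      (by gcongr; simp) (by push_cast; linarith)
    have e1 : ((m - (J + 1) : ℕ) : ℤ) = (m : ℤ) - ((J + 1 : ℕ) : ℤ) := by omega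
    have e2 : (2 * m).choose (m - (J + 1)) = (2 * m).choose (m + (J + 1)) := by
      rw [← Nat.choose_symm (show m - (J+1) ≤ 2 * m by omega)]
      congr 1; omega
    have e3 : (m : ℤ) - ((J + 1 : ℕ) : ℤ) + 1 = m - J := by push_cast; ring
    have e4 : (J : ℝ) * √(2 / m) + √(2 / m) = (J + 1 : ℕ) * √(2 / m) := by push_cast; ring
    rw [e1, e2, e3] at h1
    rw [e4, hh] at h3
    change _ = _ + Bm m (J+1) at h1
    rw [h1]
    have e5 : ((J + 1 : ℕ) : ℝ) * ((2 * Y ^ 3 + 3) / m) =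
      J * ((2 * Y ^ 3 + 3) / m) + (2 * Y ^ 3 + 1) / m + 2 / m := by push_cast; ring
    rw [e5]
    rw [abs_le] at *
    constructor <;> linarith

lemma H_right {m : ℕ} {Y : ℝ} (hm : 1 ≤ m) (J : ℕ) (hJ : (J : ℝ) ≤ Y * √m) (hJm : 2 * J ≤ m) :
    |H m ((m : ℤ) + J) - Phi (-(J * √(2 / m)))| ≤ 1 / √m / 2 + J * ((2 * Y ^ 3 + 3) / m) := by
  induction J with
  | zero =>
    have h1 := H_mid m
    have h2 := Bm_zero_le hm
    simp only [Nat.cast_zero, zero_mul, neg_zero, Phi_zero, add_zero]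
    linarith
  | succ J ih =>
    have hJ' : (J : ℝ) ≤ Y * √m := by push_cast at hJ; linarith
    have ih := ih hJ' (by omega)
    have h1 := H_step m (m + J) (by omega)
    have h2 := Bm_local hm hJ' (show 2 * J ≤ m by omega)
    have hh : √(2 / (m : ℝ)) ^ 2 = 2 / m := Real.sq_sqrt (by positivity)
    have h3 := Phi_step (J * √(2 / m)) (√(2 / m)) (J * √(2 / m)) (by positivity)
      le_rfl (by linarith [Real.sqrt_nonneg (2 / (m:ℝ))])
    have e1 : ((m + J : ℕ) : ℤ) = (m : ℤ) + J := by omega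
    have e3 : (m : ℤ) + J + 1 = m + ((J + 1 : ℕ) : ℤ) := by push_cast; ring
    have e4 : (J : ℝ) * √(2 / m) + √(2 / m) = (J + 1 : ℕ) * √(2 / m) := by push_cast; ring
    rw [e1, e3] at h1
    rw [e4, hh] at h3
    change _ = _ + Bm m J at h1
    rw [Phi_neg] at ih ⊢
    have e5 : ((J + 1 : ℕ) : ℝ) * ((2 * Y ^ 3 + 3) / m) =
      J * ((2 * Y ^ 3 + 3) / m) + (2 * Y ^ 3 + 1) / m + 2 / m := by push_cast; ring
    rw [e5]
    rw [abs_le] at *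
    constructor <;> linarith

lemma H_clt {m : ℕ} {Y : ℝ} (hm : 1 ≤ m) (I : ℤ) (hI : |(I : ℝ)| ≤ Y * √m) (hIm : 2 * |I| ≤ m) :
    |H m ((m : ℤ) - I) - Phi (I * √(2 / m))| ≤ (1 + Y * (2 * Y ^ 3 + 3)) / √m := by
  have hm0 : (0 : ℝ) < m := by exact_mod_cast hm
  have hsm : 0 < √(m : ℝ) := Real.sqrt_pos.2 hm0
  have hsmsq : √(m : ℝ) ^ 2 = m := Real.sq_sqrt hm0.le
  have hY : 0 ≤ Y := by
    by_contra h
    push Not at h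
    have := abs_nonneg (I : ℝ)
    nlinarith
  have key : ∀ J : ℕ, (J : ℝ) ≤ Y * √m →
      1 / √m / 2 + J * ((2 * Y ^ 3 + 3) / m) ≤ (1 + Y * (2 * Y ^ 3 + 3)) / √m := by
    intro J hJ
    have : (J : ℝ) * ((2 * Y ^ 3 + 3) / m) ≤ Y * (2 * Y ^ 3 + 3) / √m := by
      calc (J : ℝ) * ((2 * Y ^ 3 + 3) / m) ≤ (Y * √m) * ((2 * Y ^ 3 + 3) / √m ^ 2) := by
            rw [hsmsq]; gcongr
        _ = _ := by field_simp
    have h1 : 0 < 1 / √(m : ℝ) := by positivity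
    rw [add_div 1]; linarith
  obtain ⟨J, rfl | rfl⟩ := I.eq_nat_or_neg
  · have hJ : (J : ℝ) ≤ Y * √m := by simpa using hI
    have := H_left hm J hJ (by simp at hIm; omega)
    simpa using this.trans (key J hJ)
  · have hJ : (J : ℝ) ≤ Y * √m := by simpa using hI
    have := H_right hm J hJ (by simp at hIm; omega)
    simpa using this.trans (key J hJ)
end Fill

namespace Fill

lemma W_anti_diag (p : ℝ) (k : ℕ) (f : ℝ → ℝ) :
    W p k f = (∑ ij ∈ Finset.HasAntidiagonal.antidiagonal k, (k.choose ij.1 : ℝ) * f (p ^ ij.1 * (1 - p) ^ ij.2)) / 2 ^ k := by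
  induction k generalizing f with
  | zero => simp [W, wt]
  | succ k ih =>
    rw [W_succ, ih, Finset.sum_antidiagonal_choose_succ_mul (fun i j => f (p ^ i * (1 - p) ^ j)),
      ← Finset.sum_add_distrib, pow_succ, div_mul_eq_div_div_swap]
    congr 1
    rw [Finset.sum_div]
    apply Finset.sum_congr rfl
    intro ij hij
    rw [Finset.HasAntidiagonal.mem_antidiagonal] at hij
    rw [← Nat.choose_symm_of_eq_add hij.symm]
    rw [show p * (p ^ ij.1 * (1 - p) ^ ij.2) = p ^ (ij.1 + 1) * (1 - p) ^ ij.2 by ring,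
      show (1 - p) * (p ^ ij.1 * (1 - p) ^ ij.2) = p ^ ij.1 * (1 - p) ^ (ij.2 + 1) by ring]
    ring

lemma W_binom (p : ℝ) (m : ℕ) (f : ℝ → ℝ) :
    W p (2 * m) f = ∑ s ∈ Finset.range (2 * m + 1),
      ((2 * m).choose s : ℝ) / 4 ^ m * f (p ^ s * (1 - p) ^ (2 * m - s)) := by
  rw [W_anti_diag, Finset.Nat.sum_antidiagonal_eq_sum_range_succ_mk, Finset.sum_div, pow_mul]
  norm_num
  apply Finset.sum_congr rfl
  intro s _
  ring

lemma atom_eq {p : ℝ} (hp : 1 / 2 < p) (hp1 : p < 1) {n m s : ℕ} (hn : 2 ≤ n) (hs : s ≤ 2 * m)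
    {L D θ : ℝ} (hL : L = -(Real.log p + Real.log (1 - p)) / 2) (hD : D = Real.log p - Real.log (1 - p))
    (hθ : Real.log n - 2 * m * L = D * θ) :
    (n : ℝ) * (p ^ s * (1 - p) ^ (2 * m - s)) = Real.exp (D * (θ + s - m)) := by
  have hn0 : (0 : ℝ) < n := by positivity
  have hq : 0 < 1 - p := by linarith
  have hp0 : 0 < p := by linarith
  rw [← Real.exp_log (show 0 < (n : ℝ) * (p ^ s * (1 - p) ^ (2 * m - s)) by positivity)]
  congr 1
  rw [Real.log_mul (by positivity) (by positivity), Real.log_mul (by positivity) (by positivity),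
    Real.log_pow, Real.log_pow, Nat.cast_sub hs]
  push_cast
  have : D * (θ + s - m) = Real.log n - 2 * m * L + D * (s - m) := by rw [hθ]; ring
  rw [this, hL, hD]
  ring

lemma G_zero {n : ℕ} : G n 0 = 0 := by
  unfold G; simp

lemma G_nonneg {n : ℕ} (hn : 2 ≤ n) {x : ℝ} (h0 : 0 ≤ x) (h1 : x ≤ 1) : 0 ≤ G n x := by
  have := G_mono hn le_rfl h0 h1
  rwa [G_zero] at this

lemma geo_sum {ρ : ℝ} (h0 : 0 ≤ ρ) (h1 : ρ < 1) (S : Finset ℕ) (g : ℕ → ℕ)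
    (hg : Set.InjOn g S) : ∑ s ∈ S, ρ ^ (g s) ≤ (1 - ρ)⁻¹ := by
  rw [← Finset.sum_image (f := fun j => ρ ^ j) hg, ← tsum_geometric_of_lt_one h0 h1]
  exact (summable_geometric_of_lt_one h0 h1).sum_le_tsum _ (fun _ _ => by positivity)

lemma geo_sum_int {ρ : ℝ} (h0 : 0 ≤ ρ) (h1 : ρ < 1) (N : ℕ) (i : ℤ) :
    ∑ s ∈ Finset.range N, ρ ^ ((s : ℤ) - i).natAbs ≤ 2 * (1 - ρ)⁻¹ := by
  rw [← Finset.sum_filter_add_sum_filter_not _ (fun s : ℕ => i ≤ (s : ℤ)), two_mul]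
  apply add_le_add
  · apply geo_sum h0 h1
    intro a ha b hb hab
    simp at ha hb hab
    omega
  · apply geo_sum h0 h1
    intro a ha b hb hab
    simp at ha hb hab
    omega

lemma W_lower {p : ℝ} (hp : 0 < p) (hp1 : p < 1) (m : ℕ) (g : ℝ → ℝ)
    (hg : ∀ x, 0 ≤ x → x ≤ 1 → 0 ≤ g x) (s : ℕ) (hs : s ≤ 2 * m) :
    ((2 * m).choose s : ℝ) / 4 ^ m * g (p ^ s * (1 - p) ^ (2 * m - s)) ≤ W p (2 * m) g := by
  rw [W_binom]
  have hq : 0 < 1 - p := by linarith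
  refine Finset.single_le_sum (f := fun s => ((2 * m).choose s : ℝ) / 4 ^ m * g (p ^ s * (1 - p) ^ (2 * m - s)))
    (fun s _ => ?_) (Finset.mem_range.2 (by omega))
  have := hg (p ^ s * (1 - p) ^ (2 * m - s)) (by positivity)
    (mul_le_one₀ (pow_le_one₀ hp.le hp1.le) (by positivity) (pow_le_one₀ hq.le (by linarith)))
  positivity

lemma choose_div_le {m : ℕ} (hm : 1 ≤ m) (s : ℕ) : ((2 * m).choose s : ℝ) / 4 ^ m ≤ 1 / √m := by
  refine le_trans ?_ (Bm_zero_le hm)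
  unfold Bm
  gcongr
  have := Nat.choose_le_centralBinom s m
  rwa [Nat.centralBinom] at this

lemma W_sub_H {p : ℝ} (hp : 1 / 2 < p) (hp1 : p < 1) {n m : ℕ} (hn : 2 ≤ n) (hm : 1 ≤ m)
    {L D θ : ℝ} (hL : L = -(Real.log p + Real.log (1 - p)) / 2) (hD : D = Real.log p - Real.log (1 - p))
    (hD0 : 0 < D) (hθ : Real.log n - 2 * m * L = D * θ) :
    |W p (2 * m) (G n) - H m (m - ⌊θ⌋)| ≤ (8 * Real.exp D * (2 * (1 - Real.exp (-D))⁻¹)) / √m := by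
  have hq : 0 < 1 - p := by linarith
  have hp0 : 0 < p := by linarith
  have hn0 : (0 : ℝ) < n := by positivity
  rw [W_binom, H, ← Finset.sum_sub_distrib]
  refine (Finset.abs_sum_le_sum_abs _ _).trans ?_
  have hρ1 : Real.exp (-D) < 1 := by rw [Real.exp_lt_one_iff]; linarith
  have key : ∀ s ∈ Finset.range (2 * m + 1),
      |((2 * m).choose s : ℝ) / 4 ^ m * G n (p ^ s * (1 - p) ^ (2 * m - s)) -
        (if (m : ℤ) - ⌊θ⌋ ≤ (s : ℤ) then ((2 * m).choose s : ℝ) / 4 ^ m else 0)| ≤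
      1 / √m * (8 * Real.exp D * Real.exp (-D) ^ ((s : ℤ) - ((m : ℤ) - ⌊θ⌋)).natAbs) := by
    intro s hs
    rw [Finset.mem_range] at hs
    have ha := atom_eq hp hp1 hn (show s ≤ 2 * m by omega) hL hD hθ
    set x := p ^ s * (1 - p) ^ (2 * m - s) with hx
    have hx0 : 0 < x := by positivity
    have hx1 : x ≤ 1 :=
      mul_le_one₀ (pow_le_one₀ hp0.le hp1.le) (by positivity) (pow_le_one₀ hq.le (by linarith))
    have hc := choose_div_le hm s
    have hc0 : 0 ≤ ((2 * m).choose s : ℝ) / 4 ^ m := by positivity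
    have hf1 := Int.floor_le θ
    have hf2 := Int.lt_floor_add_one θ
    have hG0 := G_nonneg hn hx0.le hx1
    have hG1 := G_le_one (n := n) hx0.le hx1
    have hG : |G n x - (if (m : ℤ) - ⌊θ⌋ ≤ (s : ℤ) then 1 else 0)| ≤
        8 * Real.exp D * Real.exp (-D) ^ ((s : ℤ) - ((m : ℤ) - ⌊θ⌋)).natAbs := by
      rw [← Real.exp_nat_mul, mul_assoc, ← Real.exp_add]
      have hcast : ((((s : ℤ) - ((m : ℤ) - ⌊θ⌋)).natAbs : ℕ) : ℝ) = |(s : ℝ) - (m - ⌊θ⌋)| := by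
        rw [Nat.cast_natAbs]; push_cast; rfl
      rw [hcast]
      split_ifs with h
      · have h' : (m : ℝ) - ⌊θ⌋ ≤ s := by exact_mod_cast h
        rw [abs_of_nonneg (sub_nonneg.2 h'), abs_sub_comm, abs_of_nonneg (by linarith)]
        refine (G_ge hn hx0 hx1).trans ?_
        rw [ha, div_eq_mul_inv, ← Real.exp_neg]
        gcongr
        nlinarith
      · have h' : (s : ℝ) + 1 ≤ m - ⌊θ⌋ := by
          have : (s : ℤ) + 1 ≤ m - ⌊θ⌋ := by omega
          exact_mod_cast this
        rw [sub_zero, abs_of_nonneg hG0, abs_of_nonpos (by linarith)]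
        refine (G_le hx0.le hx1).trans ?_
        rw [ha]
        have : Real.exp (D * (θ + s - m)) ≤ Real.exp (D + -((s : ℝ) - (m - ⌊θ⌋)) * -D) := by
          gcongr
          nlinarith
        have h0 := Real.exp_pos (D + -((s : ℝ) - (m - ⌊θ⌋)) * -D)
        linarith
    have e : ((2 * m).choose s : ℝ) / 4 ^ m * G n x -
        (if (m : ℤ) - ⌊θ⌋ ≤ (s : ℤ) then ((2 * m).choose s : ℝ) / 4 ^ m else 0) =
        ((2 * m).choose s : ℝ) / 4 ^ m * (G n x - (if (m : ℤ) - ⌊θ⌋ ≤ (s : ℤ) then 1 else 0)) := by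
      split_ifs <;> ring
    rw [e, abs_mul, abs_of_nonneg hc0]
    gcongr
  refine (Finset.sum_le_sum key).trans ?_
  rw [← Finset.mul_sum, ← Finset.mul_sum]
  have := geo_sum_int (Real.exp_pos (-D)).le hρ1 (2 * m + 1) ((m : ℤ) - ⌊θ⌋)
  calc _ ≤ 1 / √m * (8 * Real.exp D * (2 * (1 - Real.exp (-D))⁻¹)) := by gcongr
    _ = _ := by ring
end Fill

namespace Fill

lemma main_est {p : ℝ} (hp : 1 / 2 < p) (hp1 : p < 1)
    {L D : ℝ} (hL : L = -(Real.log p + Real.log (1 - p)) / 2) (hD : D = Real.log p - Real.log (1 - p))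
    (hD0 : 0 < D) (Y : ℝ) (hY : 0 ≤ Y) :
    ∃ C > (0 : ℝ), ∃ c > (0 : ℝ), ∃ M : ℕ, ∀ m n : ℕ, M ≤ m → 2 ≤ n → 2 * Real.exp D ≤ n →
      ∀ θ : ℝ, Real.log n - 2 * m * L = D * θ → |θ| ≤ Y * √m →
      |W p (2 * m) (G n) - Phi (θ * √(2 / m))| ≤ C / √m ∧
      c / √m ≤ W p (2 * m) (dec p n) ∧ c / √m ≤ W p (2 * m + 1) (dec p n) := by
  have hq : 0 < 1 - p := by linarith
  have hp0 : 0 < p := by linarith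
  have hρ1 : Real.exp (-D) < 1 := by rw [Real.exp_lt_one_iff]; linarith
  have hρ2 : 0 < 1 - Real.exp (-D) := by linarith
  set Z := Y + 1 with hZ
  set a := p * (1 - p) * (1 - p) ^ 2 * Real.exp (-2 * Real.exp D) / 4 with hadef
  have ha : 0 < a := by positivity
  set b := Real.exp (-(2 * Z ^ 2)) / 4 with hbdef
  have hb : 0 < b := by positivity
  refine ⟨8 * Real.exp D * (2 * (1 - Real.exp (-D))⁻¹) + (1 + Z * (2 * Z ^ 3 + 3)) + 2, by positivity,
    b * (a / 2), by positivity, ⌈(2 * Z) ^ 2⌉₊ + 1, ?_⟩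
  intro m n hM hn hnD θ hθ hθY
  have hm : 1 ≤ m := by omega
  have hm' : (1 : ℝ) ≤ m := by exact_mod_cast hm
  have hm0 : (0 : ℝ) < m := by linarith
  have hn0 : (0 : ℝ) < n := by positivity
  have hsm : 0 < √(m : ℝ) := Real.sqrt_pos.2 hm0
  have hsm1 : 1 ≤ √(m : ℝ) := Real.one_le_sqrt.2 hm'
  have hsmsq : √(m : ℝ) ^ 2 = m := Real.sq_sqrt hm0.le
  have hMm : (2 * Z) ^ 2 ≤ (m : ℝ) := by
    have := Nat.le_ceil ((2 * Z) ^ 2)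
    have h2 : ((⌈(2 * Z) ^ 2⌉₊ + 1 : ℕ) : ℝ) ≤ m := by exact_mod_cast hM
    push_cast at h2
    linarith
  have hZm : 2 * Z ≤ √m := Real.le_sqrt_of_sq_le hMm
  have hf1 := Int.floor_le θ
  have hf2 := Int.lt_floor_add_one θ
  have hI : |((⌊θ⌋ : ℤ) : ℝ)| ≤ Z * √m := by
    have : |((⌊θ⌋ : ℤ) : ℝ)| ≤ |θ| + 1 := by
      rw [abs_le]
      constructor <;> linarith [neg_abs_le θ, le_abs_self θ]
    nlinarith
  have hIm : 2 * |⌊θ⌋| ≤ (m : ℤ) := by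
    have : 2 * |((⌊θ⌋ : ℤ) : ℝ)| ≤ m := by nlinarith
    exact_mod_cast this
  refine ⟨?_, ?_⟩
  · have h1 := W_sub_H hp hp1 hn hm hL hD hD0 hθ
    have h2 := H_clt hm ⌊θ⌋ hI hIm
    have h3 := Phi_lip (⌊θ⌋ * √(2 / m)) (θ * √(2 / m))
    have h4 : |⌊θ⌋ * √(2 / m) - θ * √(2 / m)| ≤ 2 / √m := by
      rw [← sub_mul, abs_mul, abs_of_nonneg (Real.sqrt_nonneg _)]
      have h5 : |(⌊θ⌋ : ℝ) - θ| ≤ 1 := by rw [abs_le]; constructor <;> linarith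
      have h6 : √(2 / (m : ℝ)) ≤ 2 / √m := by
        rw [Real.sqrt_div' _ hm0.le]
        gcongr
        rw [Real.sqrt_le_left] <;> norm_num
      calc |(⌊θ⌋ : ℝ) - θ| * √(2 / (m : ℝ)) ≤ 1 * (2 / √m) := by gcongr
        _ = _ := one_mul _
    replace h3 := h3.trans h4
    rw [add_div, add_div]
    rw [abs_le] at h1 h2 h3 ⊢
    constructor <;> linarith
  · have hII := abs_le.1 (show |⌊θ⌋| ≤ (m : ℤ) by have := abs_nonneg ⌊θ⌋; omega)
    obtain ⟨s, hs⟩ := Int.eq_ofNat_of_zero_le (show 0 ≤ (m : ℤ) - ⌊θ⌋ by omega)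
    have hs2 : s ≤ 2 * m := by omega
    have hB : b / √m ≤ ((2 * m).choose s : ℝ) / 4 ^ m := by
      have h1 := Bm_low (m := m) (j := ⌊θ⌋.natAbs) (Y := Z) hm
        (by rw [Nat.cast_natAbs]; push_cast; exact hI)
        (by rw [Int.abs_eq_natAbs] at hIm; omega)
      refine h1.trans (le_of_eq ?_)
      unfold Bm
      congr 2
      rcases le_or_gt 0 ⌊θ⌋ with h | h
      · rw [← Nat.choose_symm hs2]
        congr 1; omega
      · congr 1; omega
    have hat := atom_eq hp hp1 hn hs2 hL hD hθ
    have hsr : (s : ℝ) = m - ⌊θ⌋ := by exact_mod_cast hs.symm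
    set x := p ^ s * (1 - p) ^ (2 * m - s) with hx
    have hx0 : 0 < x := by positivity
    have hx1 : x ≤ 1 :=
      mul_le_one₀ (pow_le_one₀ hp0.le hp1.le) (by positivity) (pow_le_one₀ hq.le (by linarith))
    have hlo : 1 ≤ n * x := by
      rw [hat, Real.one_le_exp_iff, hsr]
      apply mul_nonneg hD0.le; linarith
    have hhi : n * x ≤ Real.exp D := by
      rw [hat, hsr]
      apply Real.exp_le_exp.2
      apply mul_le_of_le_one_right hD0.le; linarith
    have hd1 : a ≤ dec p n x := dec_lower hp0 hp1 hn hq (by linarith) hhi hnD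
    have hd2 : a ≤ dec p n ((1 - p) * x) := by
      apply dec_lower hp0 hp1 hn hq _ _ hnD
      · rw [mul_left_comm]
        exact le_mul_of_one_le_right hq.le hlo
      · rw [mul_left_comm]
        exact (mul_le_of_le_one_left (by linarith) (by linarith)).trans hhi
    have hdn : ∀ y, 0 ≤ y → y ≤ 1 → 0 ≤ dec p n y := fun y h0 h1 => dec_nonneg hp0 hp1 hn h0 h1
    constructor
    · have := W_lower hp0 hp1 m (dec p n) hdn s hs2
      refine le_trans ?_ this
      calc b * (a / 2) / √m = (b / √m) * (a / 2) := by ring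
        _ ≤ ((2 * m).choose s : ℝ) / 4 ^ m * dec p n x := by gcongr; linarith
    · rw [W_succ]
      have := W_lower hp0 hp1 m (fun x => (dec p n (p * x) + dec p n ((1 - p) * x)) / 2) (by
        intro y h0 h1
        have h2 := hdn (p * y) (by positivity) (mul_le_one₀ (by linarith) (by assumption) (by assumption))
        have h3 := hdn ((1 - p) * y) (by positivity) (mul_le_one₀ (by linarith) (by assumption) (by assumption))
        positivity) s hs2
      refine le_trans ?_ this
      have h2 := hdn (p * x) (by positivity) (mul_le_one₀ hp1.le hx0.le hx1)
      calc b * (a / 2) / √m = (b / √m) * (a / 2) := by ring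
        _ ≤ ((2 * m).choose s : ℝ) / 4 ^ m * ((dec p n (p * x) + dec p n ((1 - p) * x)) / 2) := by
          gcongr; linarith
end Fill

namespace Fill

set_option maxHeartbeats 2000000 in
lemma loc_even {p : ℝ} (hp : 1 / 2 < p) (hp1 : p < 1)
    {L D : ℝ} (hL : L = -(Real.log p + Real.log (1 - p)) / 2) (hD : D = Real.log p - Real.log (1 - p))
    (hL0 : 0 < L) (hD0 : 0 < D) (x β : ℝ) (hβ : β = D * x / (2 * L)) :
    ∃ B > (0 : ℝ), ∃ C > (0 : ℝ), ∃ c > (0 : ℝ), ∃ w0 : ℝ, B + 2 ≤ w0 ∧ 2 * (|β| + 1) ≤ w0 ∧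
      ∀ (n : ℕ) (w : ℝ), 2 ≤ n → w0 ≤ w → w ^ 2 * L = Real.log n →
      ∀ m : ℕ, |2 * (m : ℝ) - (w ^ 2 - β * w)| ≤ B + 2 →
        |W p (2 * m) (G n) - Phi x| ≤ C / w ∧
        c / w ≤ W p (2 * m) (dec p n) ∧ c / w ≤ W p (2 * m + 1) (dec p n) ∧
        (B ≤ 2 * (m : ℝ) - (w ^ 2 - β * w) → W p (2 * m) (G n) ≤ Phi x - 1 / (2 * w)) ∧
        (2 * (m : ℝ) - (w ^ 2 - β * w) ≤ -B → Phi x + 1 / (2 * w) ≤ W p (2 * m) (G n)) := by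
  obtain ⟨C, hC, c, hc, M, hmain⟩ := main_est hp hp1 hL hD hD0 (2 * (|x| / 2 + 1)) (by positivity)
  obtain ⟨c0, hc0, hgap⟩ := Phi_gap x
  set e0 := |x| * (|β| + 1) with he0
  have he0' : 0 ≤ e0 := by positivity
  set z0 := (2 * C + 1) / c0 with hz0
  have hz0' : 0 < z0 := by positivity
  set B := (z0 + e0) * D / (2 * L) with hB
  have hB0 : 0 < B := by positivity
  set R := (B + 2) * L / D with hR
  have hR0 : 0 < R := by positivity
  have hw0 : 0 ≤ |β| := abs_nonneg β
  have hDL : 0 < (D + 1) / L := by positivity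
  have hMM : (0 : ℝ) ≤ M := by positivity
  refine ⟨B, hB0, 2 * (2 * C + (2 * R + e0)), by positivity, c, hc,
    1 + (B + 2) + R + 2 * (|β| + 1) + 2 * z0 + (D + 1) / L + 4 * M, by linarith, by linarith, ?_⟩
  intro n w hn hw hwn m hd
  have w1 : 1 ≤ w := by linarith
  have wpos : 0 < w := by linarith
  have wB : B + 2 ≤ w := by linarith
  have wR : R ≤ w := by linarith
  have wβ : 2 * (|β| + 1) ≤ w := by linarith
  have wz : 2 * z0 ≤ w := by linarith
  have wD : (D + 1) / L ≤ w := by linarith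
  have wM : 4 * (M : ℝ) ≤ w := by linarith
  clear hw
  set d := 2 * (m : ℝ) - (w ^ 2 - β * w) with hdd
  set k : ℝ := 2 * (m : ℝ) with hk
  have hkd : k = w ^ 2 - β * w + d := by rw [hdd]; ring
  have hdw : |d| ≤ w := hd.trans wB
  have hβw : |β * w| ≤ |β| * w := by rw [abs_mul, abs_of_pos wpos]
  have hmix : |β| * w + w ≤ w ^ 2 / 2 := by
    calc |β| * w + w = (|β| + 1) * w := by ring
      _ ≤ (w / 2) * w := by gcongr; linarith
      _ = _ := by ring
  have ww : w ≤ w ^ 2 := le_self_pow₀ w1 (by norm_num)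
  have ww0 : 0 ≤ w ^ 2 := by positivity
  have hk1 : w ^ 2 / 2 ≤ k := by
    have := neg_abs_le d; have := le_abs_self (β * w); linarith
  have hk2 : k ≤ 2 * w ^ 2 := by
    have := le_abs_self d; have := neg_abs_le (β * w); linarith
  have hm1 : w ^ 2 / 4 ≤ (m : ℝ) := by linarith
  have hm2 : (m : ℝ) ≤ w ^ 2 := by linarith
  have hm0 : (0 : ℝ) < m := lt_of_lt_of_le (by positivity) hm1
  have hkpos : 0 < k := by linarith
  have hsm1 : w / 2 ≤ √(m : ℝ) := Real.le_sqrt_of_sq_le (by linarith [show (w / 2) ^ 2 = w ^ 2 / 4 by ring])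
  have hsm2 : √(m : ℝ) ≤ w := by
    rw [Real.sqrt_le_left wpos.le]; exact hm2
  have hsm : 0 < √(m : ℝ) := by linarith
  have hsk : 0 < √k := Real.sqrt_pos.2 hkpos
  have hsksq : √k ^ 2 = k := Real.sq_sqrt hkpos.le
  have hsk1 : w / 2 ≤ √k := hsm1.trans (Real.sqrt_le_sqrt (by linarith))
  have hsk2 : √k ≤ 2 * w := by
    rw [Real.sqrt_le_left (by positivity), mul_pow]; linarith
  have hskm : √k ≤ 2 * √m := by
    rw [Real.sqrt_le_left (by positivity), mul_pow, Real.sq_sqrt hm0.le]; linarith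
  -- theta
  set θ := x * w / 2 - d * L / D with hθ
  have hθeq : Real.log n - 2 * m * L = D * θ := by
    rw [← hwn]
    change w ^ 2 * L - k * L = D * θ
    rw [hkd, hθ, hβ]
    field_simp
    ring
  have hdLD : |d * L / D| ≤ R := by
    rw [abs_div, abs_mul, abs_of_pos hL0, abs_of_pos hD0, hR]
    gcongr
  have hθY : |θ| ≤ 2 * (|x| / 2 + 1) * √m := by
    have h1 : |θ| ≤ |x * w / 2| + |d * L / D| := abs_sub _ _
    have h2 : |x * w / 2| = |x| * w / 2 := by
      rw [abs_div, abs_mul, abs_of_pos wpos, abs_two]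
    have h3 : 2 * (|x| / 2 + 1) * (w / 2) ≤ 2 * (|x| / 2 + 1) * √m := by gcongr
    have h4 : 2 * (|x| / 2 + 1) * (w / 2) = |x| * w / 2 + w := by ring
    linarith
  have hnD : 2 * Real.exp D ≤ n := by
    have h1 : D + 1 ≤ Real.log n := by
      rw [← hwn]
      rw [div_le_iff₀ hL0] at wD
      exact wD.trans (by gcongr)
    have hn0 : (0 : ℝ) < n := by positivity
    rw [Real.le_log_iff_exp_le hn0, Real.exp_add] at h1
    have h2 := Real.add_one_le_exp (1 : ℝ)
    have h3 := Real.exp_pos D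
    have h4 : Real.exp D * 2 ≤ Real.exp D * Real.exp 1 := by gcongr; linarith
    linarith
  have hMm : M ≤ m := by
    have : (M : ℝ) ≤ m := by linarith
    exact_mod_cast this
  obtain ⟨r1, r2, r3⟩ := hmain m n hMm hn hnD θ hθeq hθY
  set u := θ * √(2 / m) with hu
  have hs2 : √(2 / (m : ℝ)) = 2 / √k := by
    rw [show (2 / (m : ℝ)) = 2 ^ 2 / k by rw [hk]; field_simp, Real.sqrt_div (by positivity),
      Real.sqrt_sq (by norm_num)]
  set e := x * ((β * w - d) / (w + √k)) with he
  have hee : |e| ≤ e0 := by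
    rw [he, abs_mul, he0]
    gcongr
    rw [abs_div, abs_of_pos (show 0 < w + √k by linarith), div_le_iff₀ (by linarith)]
    have h1 : |β * w - d| ≤ |β * w| + |d| := abs_sub _ _
    have : 0 ≤ (|β| + 1) * √k := by positivity
    have h2 : (|β| + 1) * (w + √k) = |β| * w + w + (|β| + 1) * √k := by ring
    linarith
  have hueq : u = x - (2 * (d * L / D) - e) / √k := by
    have h1 : (β * w - d) / (w + √k) = w - √k := by
      rw [div_eq_iff (by linarith)]
      linear_combination hsksq + hkd
    rw [he, h1, hu, hs2, hθ]
    field_simp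
    ring
  have hC2 : C / √m ≤ 2 * C / √k := by
    rw [div_le_div_iff₀ hsm hsk]
    calc C * √k ≤ C * (2 * √m) := by gcongr
      _ = _ := by ring
  have hcw : ∀ a : ℝ, 0 ≤ a → a / √k ≤ 2 * a / w := by
    intro a ha
    rw [div_le_div_iff₀ hsk wpos]
    calc a * w = 2 * a * (w / 2) := by ring
      _ ≤ _ := by gcongr
  have hcm : c / w ≤ c / √m := by gcongr
  have hkw : 1 / (2 * w) ≤ 1 / √k := one_div_le_one_div_of_le hsk hsk2
  have hc0z : c0 * z0 = 2 * C + 1 := by rw [hz0]; field_simp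
  have hz1 : z0 / √k ≤ 1 := by rw [div_le_one hsk]; linarith
  have hz0k : 0 ≤ z0 / √k := by positivity
  have hgap' := hgap (z0 / √k) hz0k hz1
  have hcz : c0 * (z0 / √k) = 2 * C / √k + 1 / √k := by rw [← mul_div_assoc, hc0z, add_div]
  rw [hcz] at hgap'
  have hBL : 2 * (B * L / D) = z0 + e0 := by rw [hB]; field_simp
  have hr1 := abs_le.1 r1
  have hee' := abs_le.1 hee
  refine ⟨?_, hcm.trans r2, hcm.trans r3, ?_, ?_⟩
  · have h1 := Phi_lip u x
    have h2 : |u - x| ≤ (2 * R + e0) / √k := by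
      rw [hueq, sub_sub_cancel_left, abs_neg, abs_div, abs_of_pos hsk]
      gcongr
      refine (abs_sub _ _).trans ?_
      rw [abs_mul, abs_two]
      linarith
    have h3 : |W p (2 * m) (G n) - Phi x| ≤ (2 * C + (2 * R + e0)) / √k := by
      rw [add_div]
      have h4 := abs_le.1 (h1.trans h2)
      rw [abs_le]
      constructor <;> linarith
    exact h3.trans (hcw _ (by positivity))
  · intro hdB
    have h1 : z0 ≤ 2 * (d * L / D) - e := by
      have : B * L / D ≤ d * L / D := by gcongr
      linarith
    have h2 : u ≤ x - z0 / √k := by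
      rw [hueq]
      have : z0 / √k ≤ (2 * (d * L / D) - e) / √k := by gcongr
      linarith
    have h3 : Phi u ≤ Phi (x - z0 / √k) := monotone_cdf _ h2
    linarith [hgap'.1]
  · intro hdB
    have h1 : 2 * (d * L / D) - e ≤ -z0 := by
      have : d * L / D ≤ -B * L / D := by gcongr
      have h5 : -B * L / D = - (B * L / D) := by ring
      linarith
    have h2 : x + z0 / √k ≤ u := by
      rw [hueq]
      have : (2 * (d * L / D) - e) / √k ≤ (-z0) / √k := by gcongr
      rw [neg_div] at this
      linarith
    have h3 : Phi (x + z0 / √k) ≤ Phi u := monotone_cdf _ h2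
    linarith [hgap'.2]

lemma disc_ivt (P : ℕ → Prop) (a b : ℕ) (hab : a ≤ b) (ha : P a) (hb : ¬ P b) :
    ∃ k, a ≤ k ∧ k < b ∧ P k ∧ ¬ P (k + 1) := by
  induction b, hab using Nat.le_induction with
  | base => exact absurd ha hb
  | succ b hab ih =>
    by_cases h : P b
    · exact ⟨b, hab, by omega, h, hb⟩
    · obtain ⟨k, h1, h2, h3⟩ := ih h
      exact ⟨k, h1, by omega, h3⟩

lemma det_loc {p : ℝ} (hp : 1 / 2 < p) (hp1 : p < 1)
    {L D : ℝ} (hL : L = -(Real.log p + Real.log (1 - p)) / 2) (hD : D = Real.log p - Real.log (1 - p))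
    (hL0 : 0 < L) (hD0 : 0 < D) (x β : ℝ) (hβ : β = D * x / (2 * L)) :
    ∃ C > (0 : ℝ), ∃ w0 : ℝ, ∀ (n : ℕ) (w : ℝ), 2 ≤ n → w0 ≤ w → w ^ 2 * L = Real.log n →
      ∃ k : ℕ, |(k : ℝ) - (w ^ 2 - β * w)| ≤ C ∧ |W p k (G n) - Phi x| ≤ C / w ∧
        Phi x + 1 / w ^ 2 ≤ W p k (G n) ∧ W p (k + 2) (G n) ≤ Phi x - 1 / w ^ 2 ∧ w ^ 2 / 2 ≤ k := by
  obtain ⟨B, hB, C, hC, c, hc, w0, hw0B, hw0β, h⟩ := loc_even hp hp1 hL hD hL0 hD0 x β hβ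
  refine ⟨B + 2 + C, by positivity, max w0 (max 2 (2 / c)), ?_⟩
  intro n w hn hw hwn
  simp only [max_le_iff] at hw
  obtain ⟨hw0, hw2, hwc⟩ := hw
  have wpos : 0 < w := by linarith
  have h := h n w hn hw0 hwn
  set κ := w ^ 2 - β * w with hκ
  have hβ0 := abs_nonneg β
  have hκw : w ^ 2 / 2 + (B + 2) ≤ κ := by
    have : β * w ≤ |β| * w := by gcongr; exact le_abs_self β
    nlinarith
  have hδ1 : 1 / w ^ 2 ≤ 1 / (2 * w) := one_div_le_one_div_of_le (by positivity) (by nlinarith)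
  have hδ2 : 2 * (1 / w ^ 2) ≤ c / w := by
    rw [← mul_div_assoc, mul_one, div_le_div_iff₀ (by positivity) wpos]
    rw [div_le_iff₀ hc] at hwc
    nlinarith
  have hδ0 : 0 < 1 / w ^ 2 := by positivity
  have hcw0 : 0 < c / w := by positivity
  -- endpoints
  have w2 : 0 ≤ w ^ 2 := by positivity
  set a := ⌊(κ - B) / 2⌋₊ with ha
  set b := ⌈(κ + B) / 2⌉₊ with hb
  have ha1 := Nat.floor_le (show 0 ≤ (κ - B) / 2 by linarith)
  have ha2 := Nat.lt_floor_add_one ((κ - B) / 2)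
  have hb1 := Nat.le_ceil ((κ + B) / 2)
  have hb2 := Nat.ceil_lt_add_one (show 0 ≤ (κ + B) / 2 by linarith)
  rw [← ha] at ha1 ha2
  rw [← hb] at hb1 hb2
  have hin : ∀ m : ℕ, a ≤ m → m ≤ b → |2 * (m : ℝ) - κ| ≤ B + 2 := by
    intro m h1 h2
    have h1' : (a : ℝ) ≤ m := by exact_mod_cast h1
    have h2' : (m : ℝ) ≤ b := by exact_mod_cast h2
    rw [abs_le]; constructor <;> linarith
  have hab : a ≤ b := by
    have : (a : ℝ) ≤ b := by linarith
    exact_mod_cast this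
  have hEa := (h a (hin a le_rfl hab)).2.2.2.2 (by linarith)
  have hEb := (h b (hin b hab le_rfl)).2.2.2.1 (by linarith)
  obtain ⟨k, hk1, hk2, hk3, hk4⟩ := disc_ivt (fun k => Phi x + 1 / w ^ 2 ≤ W p k (G n)) (2 * a) (2 * b)
    (by omega) (by linarith) (by
      rw [not_le]
      have : 0 < 1 / (2 * w) := by positivity
      linarith)
  rw [not_le] at hk4
  have hk1' : 2 * (a : ℝ) ≤ k := by exact_mod_cast hk1
  have hk2' : (k : ℝ) ≤ 2 * b := by exact_mod_cast hk2.le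
  have hd := W_dec p n (k + 1)
  have hdec : c / w ≤ W p (k + 1) (dec p n) := by
    rcases Nat.even_or_odd' (k + 1) with ⟨m, hm | hm⟩
    · rw [hm]; exact (h m (hin m (by omega) (by omega))).2.1
    · rw [hm]; exact (h m (hin m (by omega) (by omega))).2.2.1
  have hCle : C / w ≤ (B + 2 + C) / w := by gcongr; linarith
  refine ⟨k, ?_, ?_, hk3, ?_, ?_⟩
  · rw [abs_le]; constructor <;> linarith
  · refine le_trans ?_ hCle
    rcases Nat.even_or_odd' k with ⟨m, hm | hm⟩
    · rw [hm]; exact (h m (hin m (by omega) (by omega))).1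
    · obtain ⟨g1, g2, -⟩ := h m (hin m (by omega) (by omega))
      have hd2 := W_dec p n (2 * m)
      rw [← hm] at hd2
      rw [abs_of_nonneg (by linarith)]
      have := (abs_le.1 g1).2
      linarith
  · change W p (k + 1 + 1) (G n) ≤ _
    linarith
  · linarith
end Fill

namespace Fill

lemma det_gen {p : ℝ} (hp : 0 < p) (hp1 : p < 1) (hp2 : p ≠ 1 / 2) (x : ℝ) {L D : ℝ}
    (hL : L = Real.log (1 / √(p * (1 - p)))) (hD : D = |Real.log (p / (1 - p))|) :
    0 < L ∧ ∃ C > (0 : ℝ), ∃ w0 : ℝ, ∀ (n : ℕ) (w : ℝ), 2 ≤ n → w0 ≤ w → w ^ 2 * L = Real.log n →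
      ∃ k : ℕ, |(k : ℝ) - (w ^ 2 - D * x / (2 * L) * w)| ≤ C ∧ |W p k (G n) - Phi x| ≤ C / w ∧
        Phi x + 1 / w ^ 2 ≤ W p k (G n) ∧ W p (k + 2) (G n) ≤ Phi x - 1 / w ^ 2 ∧ w ^ 2 / 2 ≤ k := by
  have hq : 0 < 1 - p := by linarith
  have hL' : L = -(Real.log p + Real.log (1 - p)) / 2 := by
    rw [hL, one_div, Real.log_inv, Real.log_sqrt (by positivity), Real.log_mul hp.ne' hq.ne']
    ring
  have h1 := Real.log_neg hp hp1
  have h2 := Real.log_neg hq (by linarith)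
  have hL0 : 0 < L := by rw [hL']; linarith
  refine ⟨hL0, ?_⟩
  rw [Real.log_div hp.ne' hq.ne'] at hD
  rcases lt_or_gt_of_ne hp2 with h | h
  · have hlt : Real.log p < Real.log (1 - p) := Real.log_lt_log hp (by linarith)
    rw [abs_of_neg (by linarith)] at hD
    have := det_loc (p := 1 - p) (L := L) (D := D) (by linarith) (by linarith)
      (by rw [hL', sub_sub_cancel]; ring) (by rw [hD, sub_sub_cancel]; ring) hL0 (by linarith) x _ rfl
    simp_rw [← W_symm p] at this
    exact this
  · have hlt : Real.log (1 - p) < Real.log p := Real.log_lt_log hq (by linarith)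
    rw [abs_of_pos (by linarith)] at hD
    exact det_loc h hp1 hL' hD hL0 (by linarith) x _ rfl

lemma bdd_all (f : ℕ → ℝ) (C : ℝ) (N : ℕ) (h : ∀ n, N ≤ n → f n ≤ C) :
    ∃ C', ∀ n, f n ≤ C' := by
  refine ⟨|C| + ∑ i ∈ Finset.range N, |f i|, fun n => ?_⟩
  rcases le_or_gt N n with hn | hn
  · have := Finset.sum_nonneg (s := Finset.range N) (fun i _ => abs_nonneg (f i))
    linarith [h n hn, le_abs_self C]
  · have := Finset.single_le_sum (f := fun i => |f i|) (fun i _ => abs_nonneg (f i)) (Finset.mem_range.2 hn)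
    linarith [le_abs_self (f n), abs_nonneg C]

lemma prob_lower {p : ℝ} (hp : 0 < p) (hp1 : p < 1) {ν : Measure (ℕ → ℕ → Bool)} (hν : IIDBits p ν)
    {n k : ℕ} {α w : ℝ} (hw : 0 < w) (h1 : α + 1 / w ^ 2 ≤ W p k (G n))
    (h2 : W p (k + 2) (G n) ≤ α - 1 / w ^ 2) (h3 : w ^ 2 / 2 ≤ k) :
    1 - ENNReal.ofReal (8 * ((k : ℝ) ^ 2 / 2 ^ k)) ≤
      ν {ω | fillupLevel α ω n = k ∨ fillupLevel α ω n = k + 1} := by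
  have := hν.1
  have hδ : 0 < 1 / w ^ 2 := by positivity
  have c1 := cheb hp hp1 hν n k hδ
  have c2 := cheb hp hp1 hν n (k + 2) hδ
  have hw4 : (w ^ 2) ^ 2 ≤ 4 * (k : ℝ) ^ 2 := by
    calc (w ^ 2) ^ 2 ≤ (2 * (k : ℝ)) ^ 2 := by gcongr; linarith
      _ = _ := by ring
  have b1 : (1 / 2 ^ k : ℝ) / (1 / w ^ 2) ^ 2 ≤ 4 * ((k : ℝ) ^ 2 / 2 ^ k) := by
    calc (1 / 2 ^ k : ℝ) / (1 / w ^ 2) ^ 2 = (w ^ 2) ^ 2 / 2 ^ k := by field_simp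
      _ ≤ 4 * (k : ℝ) ^ 2 / 2 ^ k := by gcongr
      _ = _ := by ring
  have b2 : (1 / 2 ^ (k + 2) : ℝ) / (1 / w ^ 2) ^ 2 ≤ 4 * ((k : ℝ) ^ 2 / 2 ^ k) := by
    refine le_trans ?_ b1
    gcongr <;> norm_num
  set B1 := {ω | 1 / w ^ 2 ≤ |fracFilled ω n k - W p k (G n)|}
  set B2 := {ω | 1 / w ^ 2 ≤ |fracFilled ω n (k + 2) - W p (k + 2) (G n)|}
  set A := {ω : ℕ → ℕ → Bool | fillupLevel α ω n = k ∨ fillupLevel α ω n = k + 1}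
  have hsub : (Set.univ : Set (ℕ → ℕ → Bool)) ⊆ A ∪ (B1 ∪ B2) := by
    intro ω _
    by_contra hcon
    simp only [Set.mem_union, not_or] at hcon
    obtain ⟨hA, hB1, hB2⟩ := hcon
    apply hA
    have hB1 : |fracFilled ω n k - W p k (G n)| < 1 / w ^ 2 := not_le.1 hB1
    have hB2 : |fracFilled ω n (k + 2) - W p (k + 2) (G n)| < 1 / w ^ 2 := not_le.1 hB2
    rw [abs_lt] at hB1 hB2
    exact level_two (by linarith) (by linarith)
  have hB : ν (B1 ∪ B2) ≤ ENNReal.ofReal (8 * ((k : ℝ) ^ 2 / 2 ^ k)) := by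
    refine (measure_union_le _ _).trans ?_
    rw [← ofReal_measureReal, ← ofReal_measureReal, ← ENNReal.ofReal_add measureReal_nonneg measureReal_nonneg]
    apply ENNReal.ofReal_le_ofReal
    linarith
  rw [tsub_le_iff_right]
  calc (1 : ENNReal) = ν Set.univ := measure_univ.symm
    _ ≤ ν (A ∪ (B1 ∪ B2)) := measure_mono hsub
    _ ≤ ν A + ν (B1 ∪ B2) := measure_union_le _ _
    _ ≤ _ := by gcongr

end Fill

/-- Theorem 1 of Janson–Szpankowski, second part: for `p ≠ 1/2`, with `k_n` the integers
from the two-point concentration of `F_n(α)`, one has `E X̄_{k_n} = α + O(1/√(log n))`. -/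
theorem expectation_fracFilled_at_kn
    (p q α : ℝ) (hp : 0 < p) (hp1 : p < 1) (hp2 : p ≠ 1 / 2) (hq : q = 1 - p)
    (hα : 0 < α) (hα1 : α < 1)
    (ν : Measure (ℕ → ℕ → Bool)) (hν : IIDBits p ν)
    (xα : ℝ) (hxα : ProbabilityTheory.cdf (ProbabilityTheory.gaussianReal 0 1) xα = α) :
    ∃ C > (0 : ℝ), ∃ kn : ℕ → ℕ,
      (∀ n : ℕ, 2 ≤ n →
        |(kn n : ℝ) -
            (Real.logb (1 / Real.sqrt (p * q)) n -
              |Real.log (p / q)| / (2 * Real.log (1 / Real.sqrt (p * q)) ^ ((3 : ℝ) / 2))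
                * xα * Real.sqrt (Real.log n))| ≤ C) ∧
      Tendsto
        (fun n : ℕ =>
          ν {ω | fillupLevel α ω n = kn n ∨ fillupLevel α ω n = kn n + 1})
        atTop (nhds 1) ∧
      (∀ n : ℕ, 2 ≤ n →
        |(∫ ω, fracFilled ω n (kn n) ∂ν) - α| ≤ C / Real.sqrt (Real.logb 2 n)) := by
  subst hq
  set L := Real.log (1 / √(p * (1 - p))) with hL
  set D := |Real.log (p / (1 - p))| with hD
  obtain ⟨hL0, C, hC, w0, hdet⟩ := Fill.det_gen hp hp1 hp2 xα hL hD
  have hα' : Fill.Phi xα = α := hxα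
  rw [hα'] at hdet
  have hlog : Tendsto (fun n : ℕ => Real.log n) atTop atTop :=
    Real.tendsto_log_atTop.comp tendsto_natCast_atTop_atTop
  have hlogL : Tendsto (fun n : ℕ => Real.log n / L) atTop atTop := hlog.atTop_div_const hL0
  set w : ℕ → ℝ := fun n => √(Real.log n / L) with hw
  have hwt : Tendsto w atTop atTop := Real.tendsto_sqrt_atTop.comp hlogL
  have hlogn : ∀ n : ℕ, 0 ≤ Real.log n := fun n => Real.log_natCast_nonneg n
  have hwsq : ∀ n, w n ^ 2 = Real.log n / L := fun n => Real.sq_sqrt (div_nonneg (hlogn n) hL0.le)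
  have hwL : ∀ n, w n ^ 2 * L = Real.log n := fun n => by rw [hwsq]; field_simp
  have hex : ∀ n : ℕ, ∃ k : ℕ, 2 ≤ n → w0 ≤ w n →
      (|(k : ℝ) - (w n ^ 2 - D * xα / (2 * L) * w n)| ≤ C ∧ |Fill.W p k (Fill.G n) - α| ≤ C / w n ∧
        α + 1 / w n ^ 2 ≤ Fill.W p k (Fill.G n) ∧ Fill.W p (k + 2) (Fill.G n) ≤ α - 1 / w n ^ 2 ∧
        w n ^ 2 / 2 ≤ k) := by
    intro n
    by_cases h : 2 ≤ n ∧ w0 ≤ w n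
    · obtain ⟨k, hk⟩ := hdet n (w n) h.1 h.2 (hwL n)
      exact ⟨k, fun _ _ => hk⟩
    · exact ⟨0, fun h1 h2 => absurd ⟨h1, h2⟩ h⟩
  choose kn hkn using hex
  obtain ⟨N, hN⟩ := eventually_atTop.1
    (((eventually_ge_atTop 2).and (hwt.eventually_ge_atTop w0)).and (hwt.eventually_gt_atTop 0))
  have hform : ∀ n : ℕ, Real.logb (1 / √(p * (1 - p))) n - D / (2 * L ^ ((3 : ℝ) / 2)) * xα * √(Real.log n)
      = w n ^ 2 - D * xα / (2 * L) * w n := by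
    intro n
    have h1 : Real.logb (1 / √(p * (1 - p))) n = w n ^ 2 := by rw [hwsq, Real.logb]
    have h2 : L ^ ((3 : ℝ) / 2) = L * √L := by
      rw [show (3 : ℝ) / 2 = 1 + 1 / 2 by norm_num, Real.rpow_add hL0, Real.rpow_one, ← Real.sqrt_eq_rpow]
    have h3 : w n = √(Real.log n) / √L := Real.sqrt_div (hlogn n) L
    rw [h1, h2, h3]
    have : 0 < √L := Real.sqrt_pos.2 hL0
    field_simp
  obtain ⟨C1, hC1⟩ := Fill.bdd_all
    (fun n => |(kn n : ℝ) - (w n ^ 2 - D * xα / (2 * L) * w n)|) C N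
    (fun n hn => (hkn n (hN n hn).1.1 (hN n hn).1.2).1)
  have hl2 : 0 < Real.log 2 := Real.log_pos (by norm_num)
  obtain ⟨C2, hC2⟩ := Fill.bdd_all
    (fun n => |Fill.W p (kn n) (Fill.G n) - α| * √(Real.logb 2 n)) (C * √(L / Real.log 2)) N (by
      intro n hn
      obtain ⟨⟨h2, h3⟩, h4⟩ := hN n hn
      have h5 := (hkn n h2 h3).2.1
      have h6 : √(Real.logb 2 n) = w n * √(L / Real.log 2) := by
        rw [hw, ← Real.sqrt_mul (div_nonneg (hlogn n) hL0.le), Real.logb]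
        congr 1
        field_simp
      calc |Fill.W p (kn n) (Fill.G n) - α| * √(Real.logb 2 n)
          ≤ C / w n * √(Real.logb 2 n) := by gcongr
        _ = C * √(L / Real.log 2) := by rw [h6]; field_simp)
  refine ⟨1 + |C1| + |C2|, by positivity, kn, ?_, ?_, ?_⟩
  · intro n _
    rw [hform]
    have := hC1 n
    have h1 := le_abs_self C1
    have h2 := abs_nonneg C2
    linarith
  · have hprob := hν.1
    have hk : Tendsto kn atTop atTop := by
      rw [← tendsto_natCast_atTop_iff (R := ℝ)]
      refine tendsto_atTop_mono' atTop ?_ (hlogL.atTop_div_const (show (0 : ℝ) < 2 by norm_num))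
      filter_upwards [eventually_ge_atTop N] with n hn
      have := (hkn n (hN n hn).1.1 (hN n hn).1.2).2.2.2.2
      rwa [hwsq] at this
    have hlim : Tendsto (fun n : ℕ => 1 - ENNReal.ofReal (8 * ((kn n : ℝ) ^ 2 / 2 ^ (kn n))))
        atTop (nhds 1) := by
      have h1 := (tendsto_pow_const_div_const_pow_of_one_lt 2 (show (1 : ℝ) < 2 by norm_num)).comp hk
      have h2 := ENNReal.tendsto_ofReal (h1.const_mul 8)
      have h3 := ENNReal.Tendsto.sub (tendsto_const_nhds (x := (1 : ENNReal))) h2 (Or.inl ENNReal.one_ne_top)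
      simpa using h3
    refine tendsto_of_tendsto_of_tendsto_of_le_of_le' hlim tendsto_const_nhds ?_
      (Eventually.of_forall fun n => prob_le_one)
    filter_upwards [eventually_ge_atTop N] with n hn
    obtain ⟨⟨h2, h3⟩, h4⟩ := hN n hn
    obtain ⟨-, -, g1, g2, g3⟩ := hkn n h2 h3
    exact Fill.prob_lower hp hp1 hν h4 g1 g2 g3
  · intro n hn
    rw [Fill.frac_int hp hp1 hν]
    have hpos : 0 < √(Real.logb 2 n) := by
      apply Real.sqrt_pos.2
      apply Real.logb_pos (by norm_num)
      exact_mod_cast hn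
    rw [le_div_iff₀ hpos]
    have := hC2 n
    have h1 := le_abs_self C2
    have h2 := abs_nonneg C1
    linarith
end

section
/- For any fixed α ∈ (0,1) and p ∈ (0,1): (i) F_n(α) = log_{1/√(pq)} n + O_p(√(ln n)), i.e., for every ε > 0 there is A > 0 such that P(|F_n(α) − log_{1/√(pq)} n| > A√(ln n)) < ε for all large n; in particular (ii) F_n(α) / log_{1/√(pq)} n → 1 in probability as n → ∞. -/
/-!
Partial fillup in tries (Janson–Szpankowski), Theorem 1 (two-point concentration
of the α-fillup level `F_n(α)`).

Model: an outcome `ω : ℕ → ℕ → Bool` encodes infinitely many strings, where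
`ω i j` is the `j`-th bit of the `i`-th string; the measure `ν` makes all bits
i.i.d. with `P(bit = 1) = p`.  The trie on `n` strings uses strings `0,…,n-1`.
-/

open MeasureTheory ProbabilityTheory Real Filter

section helpers

/-- Markov's inequality for a count of events. -/
lemma markov_count {Ω ι : Type*} [MeasurableSpace Ω] (ν : Measure Ω) [IsProbabilityMeasure ν]
    (s : Finset ι) (E : ι → Set Ω) (hE : ∀ i, MeasurableSet (E i)) (f : Ω → ℝ)
    (hf : ∀ ω, f ω = ∑ i ∈ s, (E i).indicator (fun _ => (1 : ℝ)) ω) (c : ℝ) :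
    c * ν.real {ω | c ≤ f ω} ≤ ∑ i ∈ s, ν.real (E i) := by
  have hf' : f = fun ω => ∑ i ∈ s, (E i).indicator (fun _ => (1 : ℝ)) ω := funext hf
  have hint : ∀ i ∈ s, Integrable (fun ω => (E i).indicator (fun _ => (1 : ℝ)) ω) ν :=
    fun i _ => (integrable_const (1 : ℝ)).indicator (hE i)
  have h1 : ∫ ω, f ω ∂ν = ∑ i ∈ s, ν.real (E i) := by
    rw [hf', integral_finsetSum _ hint]
    refine Finset.sum_congr rfl fun i _ => ?_
    simp [integral_indicator (hE i)]
  rw [← h1]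
  refine mul_meas_ge_le_integral_of_nonneg (ae_of_all _ fun ω => ?_) ?_ c
  · rw [hf]
    exact Finset.sum_nonneg fun i _ => Set.indicator_nonneg (fun _ _ => zero_le_one) _
  · rw [hf']
    exact integrable_finsetSum _ hint

/-- Second moment bound for a count of events. -/
lemma second_moment {Ω : Type*} [MeasurableSpace Ω] (ν : Measure Ω) [IsProbabilityMeasure ν]
    (n : ℕ) (B : ℕ → Set Ω) (hB : ∀ i, MeasurableSet (B i)) (w : ℝ) (hw : 0 < w)
    (h1 : ∀ i, ν.real (B i) = w) (h2 : ∀ i j, i ≠ j → ν.real (B i ∩ B j) = w ^ 2)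
    (f : Ω → ℝ)
    (hf : ∀ ω, f ω = ∑ i ∈ Finset.range n, (B i).indicator (fun _ => (1 : ℝ)) ω) :
    ν.real {ω | f ω ≤ 1} * (n * w) ≤ 4 := by
  have hf' : f = fun ω => ∑ i ∈ Finset.range n, (B i).indicator (fun _ => (1 : ℝ)) ω := funext hf
  rcases le_or_gt ((n : ℝ) * w) 2 with hs | hs
  · have : ν.real {ω | f ω ≤ 1} ≤ 1 := measureReal_le_one
    have h0 : (0 : ℝ) ≤ n * w := by positivity
    nlinarith
  have hint : ∀ i, Integrable (fun ω => (B i).indicator (fun _ => (1 : ℝ)) ω) ν :=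
    fun i => (integrable_const (1 : ℝ)).indicator (hB i)
  have hint2 : ∀ i j, Integrable (fun ω => (B i ∩ B j).indicator (fun _ => (1 : ℝ)) ω) ν :=
    fun i j => (integrable_const (1 : ℝ)).indicator ((hB i).inter (hB j))
  have hexp : ∀ ω, (f ω - n * w) ^ 2 =
      (∑ i ∈ Finset.range n, ∑ j ∈ Finset.range n, (B i ∩ B j).indicator (fun _ => (1 : ℝ)) ω)
      - 2 * (n * w) * (∑ i ∈ Finset.range n, (B i).indicator (fun _ => (1 : ℝ)) ω)
      + (n * w) ^ 2 := by
    intro ω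
    have : (∑ i ∈ Finset.range n, ∑ j ∈ Finset.range n,
        (B i ∩ B j).indicator (fun _ => (1 : ℝ)) ω) = f ω * f ω := by
      rw [hf, Finset.sum_mul_sum]
      refine Finset.sum_congr rfl fun i _ => Finset.sum_congr rfl fun j _ => ?_
      by_cases a : ω ∈ B i <;> by_cases b : ω ∈ B j <;> simp [a, b]
    rw [this, ← hf]; ring
  have I1 : Integrable (fun ω => ∑ i ∈ Finset.range n, ∑ j ∈ Finset.range n,
      (B i ∩ B j).indicator (fun _ => (1 : ℝ)) ω) ν :=
    integrable_finsetSum _ fun i _ => integrable_finsetSum _ fun j _ => hint2 i j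
  have I2 : Integrable (fun ω => 2 * (n * w) *
      (∑ i ∈ Finset.range n, (B i).indicator (fun _ => (1 : ℝ)) ω)) ν :=
    (integrable_finsetSum _ fun i _ => hint i).const_mul _
  have I : Integrable (fun ω => (f ω - n * w) ^ 2) ν := by
    simp_rw [hexp]
    exact (I1.sub I2).add (integrable_const _)
  have hval : ∫ ω, (f ω - n * w) ^ 2 ∂ν ≤ n * w := by
    simp_rw [hexp]
    rw [integral_add (by exact I1.sub I2) (integrable_const _), integral_sub I1 I2,
      integral_finsetSum _ fun i _ => integrable_finsetSum _ fun j _ => hint2 i j,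
      integral_const_mul, integral_finsetSum _ fun i _ => hint i]
    have e1 : ∀ i, ∫ ω, (B i).indicator (fun _ => (1 : ℝ)) ω ∂ν = w := fun i => by
      rw [← h1 i]; simp [integral_indicator (hB i)]
    have e2 : ∀ i ∈ Finset.range n, ∫ ω, ∑ j ∈ Finset.range n,
        (B i ∩ B j).indicator (fun _ => (1 : ℝ)) ω ∂ν ≤ w + n * w ^ 2 := fun i hi => by
      rw [integral_finsetSum _ fun j _ => hint2 i j]
      have : ∀ j ∈ Finset.range n, ∫ ω, (B i ∩ B j).indicator (fun _ => (1 : ℝ)) ω ∂ν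
          ≤ (if i = j then w else 0) + w ^ 2 := by
        intro j _
        rw [integral_indicator ((hB i).inter (hB j))]
        by_cases hij : i = j
        · subst hij; simp [h1]; positivity
        · simp [h2 i j hij, hij]
      refine (Finset.sum_le_sum this).trans ?_
      rw [Finset.sum_add_distrib, Finset.sum_ite_eq]
      simp [Finset.mem_range.1 hi]
    have := Finset.sum_le_sum e2
    simp only [e1, integral_const, Finset.sum_const, Finset.card_range, nsmul_eq_mul,
      probReal_univ, one_smul] at this ⊢
    nlinarith
  have hm := mul_meas_ge_le_integral_of_nonneg (ae_of_all ν fun ω => sq_nonneg (f ω - n * w)) I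
    ((n * w - 1) ^ 2)
  have hsub : ν.real {ω | f ω ≤ 1} ≤ ν.real {ω | ((n : ℝ) * w - 1) ^ 2 ≤ (f ω - n * w) ^ 2} := by
    refine measureReal_mono fun ω hω => ?_
    simp only [Set.mem_ofPred_eq] at hω ⊢
    nlinarith
  set P := ν.real {ω | f ω ≤ 1}
  have hP : 0 ≤ P := measureReal_nonneg
  have h3 : (n * w - 1) ^ 2 * P ≤ n * w :=
    (mul_le_mul_of_nonneg_left hsub (sq_nonneg _)).trans (hm.trans hval)
  have h4 : ((n : ℝ) * w) ^ 2 / 4 * P ≤ n * w := by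
    refine le_trans (mul_le_mul_of_nonneg_right ?_ hP) h3
    nlinarith
  have h5 : (0 : ℝ) < n * w := by linarith
  by_contra hc
  push Not at hc
  nlinarith

/-- probability of a word -/
noncomputable def wt (p : ℝ) {k : ℕ} (r : Fin k → Bool) : ℝ := ∏ j, if r j then p else 1 - p

lemma wt_pos {p : ℝ} (hp : 0 < p) (hp1 : p < 1) {k : ℕ} (r : Fin k → Bool) : 0 < wt p r := by
  refine Finset.prod_pos fun j _ => ?_
  split_ifs <;> linarith

/-- the event that string `i` starts with `r` -/
def pev {k : ℕ} (r : Fin k → Bool) (i : ℕ) : Set (ℕ → ℕ → Bool) := {ω | ∀ j : Fin k, ω i j = r j}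

lemma meas_pev {k : ℕ} (r : Fin k → Bool) (i : ℕ) : MeasurableSet (pev r i) := by
  have : pev r i = ⋂ j : Fin k, (fun ω : ℕ → ℕ → Bool => ω i j) ⁻¹' {r j} := by
    ext; simp [pev]
  rw [this]
  exact MeasurableSet.iInter fun j =>
    (show Measurable (fun ω : ℕ → ℕ → Bool => ω i j) by fun_prop) (measurableSet_singleton _)

lemma prob_pev_finset {p : ℝ} (hp : 0 < p) (hp1 : p < 1) {ν : Measure (ℕ → ℕ → Bool)}
    (hν : IIDBits p ν) {k : ℕ} (r : Fin k → Bool) (I : Finset ℕ) :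
    ν.real {ω | ∀ i ∈ I, ω ∈ pev r i} = wt p r ^ I.card := by
  have h := hν.2 (I ×ˢ Finset.range k) (fun s => if h : s.2 < k then r ⟨s.2, h⟩ else false)
  have hs : {ω : ℕ → ℕ → Bool | ∀ s ∈ I ×ˢ Finset.range k,
      ω s.1 s.2 = if h : s.2 < k then r ⟨s.2, h⟩ else false} = {ω | ∀ i ∈ I, ω ∈ pev r i} := by
    ext ω
    simp only [Finset.mem_product, Finset.mem_range, Set.mem_ofPred_eq, pev]
    constructor
    · intro H i hi j
      have := H (i, j) ⟨hi, j.2⟩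
      simpa using this
    · rintro H ⟨i, j⟩ ⟨hi, hj⟩
      simpa [hj] using H i hi ⟨j, hj⟩
  rw [hs] at h
  rw [measureReal_def, h, Finset.prod_product, ENNReal.toReal_prod, ]
  simp only [ENNReal.toReal_prod]
  rw [← Finset.prod_const]
  refine Finset.prod_congr rfl fun _ _ => ?_
  rw [wt, Finset.prod_range]
  refine Finset.prod_congr rfl fun j _ => ?_
  simp only [Fin.is_lt, dite_true, Fin.eta]
  rw [ENNReal.toReal_ofReal]
  split_ifs <;> linarith

lemma prefCount_eq (ω : ℕ → ℕ → Bool) (n k : ℕ) (r : Fin k → Bool) :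
    (prefCount ω n k r : ℝ) =
      ∑ i ∈ Finset.range n, (pev r i).indicator (fun _ => (1 : ℝ)) ω := by
  classical
  rw [prefCount, Finset.card_filter]
  push_cast
  refine Finset.sum_congr rfl fun i _ => ?_
  simp only [Set.indicator_apply, pev, Set.mem_ofPred_eq]

lemma meas_prefCount (n k : ℕ) (r : Fin k → Bool) :
    Measurable fun ω => (prefCount ω n k r : ℝ) := by
  simp_rw [prefCount_eq]
  exact Finset.measurable_fun_sum _ fun i _ => measurable_const.indicator (meas_pev r i)

/-- the event that `r` is filled -/
def fev (n : ℕ) {k : ℕ} (r : Fin k → Bool) : Set (ℕ → ℕ → Bool) := {ω | 2 ≤ prefCount ω n k r}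

lemma meas_fev (n : ℕ) {k : ℕ} (r : Fin k → Bool) : MeasurableSet (fev n r) := by
  have : fev n r = {ω | (2 : ℝ) ≤ prefCount ω n k r} := by
    ext ω; simp [fev]
  rw [this]
  exact measurableSet_le measurable_const (meas_prefCount n k r)

lemma prob_fev_le {p : ℝ} (hp : 0 < p) (hp1 : p < 1) {ν : Measure (ℕ → ℕ → Bool)}
    (hν : IIDBits p ν) (n : ℕ) {k : ℕ} (r : Fin k → Bool) :
    ν.real (fev n r) ≤ n * wt p r := by
  have := hν.1
  have h := markov_count ν (Finset.range n) (pev r) (meas_pev r) _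
    (fun ω => prefCount_eq ω n k r) 1
  have h1 : ∀ i, ν.real (pev r i) = wt p r := fun i => by
    simpa using prob_pev_finset hp hp1 hν r {i}
  simp only [h1, Finset.sum_const, Finset.card_range, nsmul_eq_mul, one_mul] at h
  refine le_trans (measureReal_mono fun ω hω => ?_) h
  have : 2 ≤ prefCount ω n k r := hω
  show (1 : ℝ) ≤ prefCount ω n k r
  exact_mod_cast (by omega : 1 ≤ prefCount ω n k r)

lemma prob_fev_compl {p : ℝ} (hp : 0 < p) (hp1 : p < 1) {ν : Measure (ℕ → ℕ → Bool)}
    (hν : IIDBits p ν) (n : ℕ) {k : ℕ} (r : Fin k → Bool) :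
    ν.real (fev n r)ᶜ * (n * wt p r) ≤ 4 := by
  have := hν.1
  have h := second_moment ν n (pev r) (meas_pev r) (wt p r) (wt_pos hp hp1 r)
    (fun i => by simpa using prob_pev_finset hp hp1 hν r {i})
    (fun i j hij => by
      have := prob_pev_finset hp hp1 hν r {i, j}
      rw [Finset.card_pair hij] at this
      rw [← this]; congr 1; ext; simp) _ (fun ω => prefCount_eq ω n k r)
  convert h using 3
  ext ω
  simp only [fev, Set.mem_compl_iff, Set.mem_ofPred_eq, not_le, Nat.cast_le_one]
  omega

lemma fillCount_eq (ω : ℕ → ℕ → Bool) (n k : ℕ) :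
    (fillCount ω n k : ℝ) =
      ∑ r : Fin k → Bool, (fev n r).indicator (fun _ => (1 : ℝ)) ω := by
  classical
  rw [fillCount, Finset.card_filter]
  push_cast
  refine Finset.sum_congr rfl fun i _ => ?_
  simp only [Set.indicator_apply, fev, Set.mem_ofPred_eq]

/-! ### Words under the uniform measure -/

lemma sum_sq_words (p : ℝ) (hp : 0 < p) (hp1 : p < 1) (k : ℕ) :
    ∑ r : Fin k → Bool, (Real.log (wt p r) - k * ((Real.log p + Real.log (1 - p)) / 2)) ^ 2 =
      2 ^ k * (k * ((Real.log p - Real.log (1 - p)) / 2) ^ 2) := by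
  induction k with
  | zero => simp [wt]
  | succ k ih =>
    rw [← (Fin.consEquiv fun _ => Bool).sum_comp, Fintype.sum_prod_type]
    have hw : ∀ (b : Bool) (r : Fin k → Bool), Real.log (wt p (Fin.cons b r : Fin (k+1) → Bool)) =
        Real.log (if b then p else 1 - p) + Real.log (wt p r) := by
      intro b r
      rw [wt, Fin.prod_univ_succ]
      simp only [Fin.cons_zero, Fin.cons_succ]
      change Real.log ((if b = true then p else 1 - p) * wt p r) = _
      rw [Real.log_mul _ (wt_pos hp hp1 r).ne']
      split_ifs <;> linarith
    simp only [Fin.consEquiv, Equiv.coe_fn_mk, hw, Fintype.sum_bool, if_true]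
    rw [← Finset.sum_add_distrib]
    have : ∀ r : Fin k → Bool, 
        (Real.log p + Real.log (wt p r) - ((k+1 : ℕ) : ℝ) * ((Real.log p + Real.log (1 - p)) / 2)) ^ 2 
        + (Real.log (1 - p) + Real.log (wt p r) - ((k+1 : ℕ) : ℝ) * ((Real.log p + Real.log (1 - p)) / 2)) ^ 2
        = 2 * (Real.log (wt p r) - k * ((Real.log p + Real.log (1 - p)) / 2)) ^ 2
          + 2 * ((Real.log p - Real.log (1 - p)) / 2) ^ 2 := by
      intro r; push_cast; ring
    simp only [Bool.false_eq_true, if_false, this]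
    rw [Finset.sum_add_distrib, ← Finset.mul_sum, ih]
    simp
    ring

/-- words counted: averaged bound for a function which is at most 1 and is
at most `δ` on typical words -/
lemma avg_words (p : ℝ) (hp : 0 < p) (hp1 : p < 1) (k : ℕ) (L D T δ : ℝ) (hT : 0 < T) (hδ : 0 ≤ δ)
    (hL : L = - ((Real.log p + Real.log (1 - p)) / 2)) (hD : D = (Real.log p - Real.log (1 - p)) / 2)
    (g : (Fin k → Bool) → ℝ) (hg : ∀ r, g r ≤ 1)
    (hg2 : ∀ r, |Real.log (wt p r) + k * L| ≤ T → g r ≤ δ) :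
    ∑ r, g r ≤ 2 ^ k * (k * D ^ 2 / T ^ 2 + δ) := by
  have key : ∀ r, g r ≤
      (Real.log (wt p r) - k * ((Real.log p + Real.log (1 - p)) / 2)) ^ 2 / T ^ 2 + δ := by
    intro r
    rcases le_or_gt (|Real.log (wt p r) + k * L|) T with h | h
    · have := hg2 r h
      have : 0 ≤ (Real.log (wt p r) - k * ((Real.log p + Real.log (1 - p)) / 2)) ^ 2 / T ^ 2 := by
        positivity
      linarith
    · have h1 : 1 ≤ (Real.log (wt p r) - k * ((Real.log p + Real.log (1 - p)) / 2)) ^ 2 / T ^ 2 := by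
        rw [one_le_div (by positivity)]
        have : Real.log (wt p r) - k * ((Real.log p + Real.log (1 - p)) / 2)
          = Real.log (wt p r) + k * L := by rw [hL]; ring
        rw [this, ← sq_abs (Real.log (wt p r) + k * L)]
        exact pow_le_pow_left₀ hT.le h.le 2
      have := hg r
      linarith
  refine (Finset.sum_le_sum fun r _ => key r).trans ?_
  rw [Finset.sum_add_distrib, ← Finset.sum_div, sum_sq_words p hp hp1 k, ← hD]
  simp
  apply le_of_eq; ring

lemma upper_tail {p : ℝ} (hp : 0 < p) (hp1 : p < 1) {ν : Measure (ℕ → ℕ → Bool)}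
    (hν : IIDBits p ν) (α : ℝ) (n k : ℕ) (L D T : ℝ) (hT : 0 < T)
    (hL : L = - ((Real.log p + Real.log (1 - p)) / 2))
    (hD : D = (Real.log p - Real.log (1 - p)) / 2) :
    α * ν.real {ω | α ≤ fracFilled ω n k} ≤ k * D ^ 2 / T ^ 2 + n * Real.exp (T - k * L) := by
  have := hν.1
  have h := markov_count ν Finset.univ (fun r : Fin k → Bool => fev n r) (meas_fev n) _
    (fun ω => fillCount_eq ω n k) (α * 2 ^ k)
  have h2 := avg_words p hp hp1 k L D T (n * Real.exp (T - k * L)) hT (by positivity) hL hD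
    (fun r => ν.real (fev n r)) (fun r => measureReal_le_one) (fun r hr => by
      refine (prob_fev_le hp hp1 hν n r).trans ?_
      gcongr
      rw [← Real.log_le_iff_le_exp (wt_pos hp hp1 r)]
      have := (abs_le.1 hr).2
      linarith)
  have hs : {ω | α ≤ fracFilled ω n k} = {ω | α * 2 ^ k ≤ (fillCount ω n k : ℝ)} := by
    ext ω
    simp only [fracFilled, Set.mem_ofPred_eq]
    rw [le_div_iff₀ (by positivity)]
  rw [hs]
  have h3 := h.trans h2
  have : (0:ℝ) < 2 ^ k := by positivity
  refine le_of_mul_le_mul_left ?_ this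
  linarith

lemma lower_tail {p : ℝ} (hp : 0 < p) (hp1 : p < 1) {ν : Measure (ℕ → ℕ → Bool)}
    (hν : IIDBits p ν) (α : ℝ) (n k : ℕ) (hn : 0 < n) (L D T : ℝ) (hT : 0 < T)
    (hL : L = - ((Real.log p + Real.log (1 - p)) / 2))
    (hD : D = (Real.log p - Real.log (1 - p)) / 2) (hα1 : α < 1) :
    (1 - α) * ν.real {ω | fracFilled ω n k < α} ≤
      k * D ^ 2 / T ^ 2 + 4 / n * Real.exp (T + k * L) := by
  have := hν.1
  have hn' : (0 : ℝ) < n := by exact_mod_cast hn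
  have h := markov_count ν Finset.univ (fun r : Fin k → Bool => (fev n r)ᶜ)
    (fun r => (meas_fev n r).compl) (fun ω => 2 ^ k - (fillCount ω n k : ℝ))
    (fun ω => by
      rw [fillCount_eq]
      have : (2 : ℝ) ^ k = ∑ r : Fin k → Bool, 1 := by simp
      rw [this, ← Finset.sum_sub_distrib]
      refine Finset.sum_congr rfl fun r _ => ?_
      by_cases a : ω ∈ fev n r <;> simp [a]) ((1 - α) * 2 ^ k)
  have h2 := avg_words p hp hp1 k L D T (4 / n * Real.exp (T + k * L)) hT (by positivity) hL hD
    (fun r => ν.real (fev n r)ᶜ) (fun r => measureReal_le_one) (fun r hr => by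
      have h4 := prob_fev_compl hp hp1 hν n r
      have hw := wt_pos hp hp1 r
      have h5 : Real.exp (-(T + k * L)) ≤ wt p r := by
        rw [← Real.le_log_iff_exp_le hw]
        have := (abs_le.1 hr).1
        linarith
      have h6 : (1 : ℝ) ≤ Real.exp (T + k * L) * wt p r := by
        calc (1 : ℝ) = Real.exp (T + k * L) * Real.exp (-(T + k * L)) := by
              rw [← Real.exp_add]; simp
          _ ≤ _ := by gcongr
      calc ν.real (fev n r)ᶜ ≤ 4 / (n * wt p r) := by
            rw [le_div_iff₀ (by positivity)]; exact h4
        _ ≤ 4 / (n * wt p r) * (Real.exp (T + k * L) * wt p r) :=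
            le_mul_of_one_le_right (by positivity) h6
        _ = _ := by field_simp)
  have hs : {ω | fracFilled ω n k < α} ⊆
      {ω | (1 - α) * 2 ^ k ≤ 2 ^ k - (fillCount ω n k : ℝ)} := by
    intro ω hω
    simp only [fracFilled, Set.mem_ofPred_eq] at hω ⊢
    rw [div_lt_iff₀ (by positivity)] at hω
    linarith
  have h3 := h.trans h2
  have h0 : (0:ℝ) < 2 ^ k := by positivity
  refine le_of_mul_le_mul_left ?_ h0
  have : (1 - α) * 2 ^ k * ν.real {ω | fracFilled ω n k < α} ≤ (1 - α) * 2 ^ k *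
      ν.real {ω | (1 - α) * 2 ^ k ≤ 2 ^ k - (fillCount ω n k : ℝ)} := by
    refine mul_le_mul_of_nonneg_left (measureReal_mono hs) ?_
    have : 0 < 1 - α := by linarith
    positivity
  linarith

/-! ### Deterministic facts on the fillup level -/

lemma fracFilled_succ_le (ω : ℕ → ℕ → Bool) (n k : ℕ) :
    fracFilled ω n (k + 1) ≤ fracFilled ω n k := by
  have h : fillCount ω n (k + 1) ≤ 2 * fillCount ω n k := by
    classical
    unfold fillCount
    rw [mul_comm]
    have : (2 : ℕ) = (Finset.univ : Finset Bool).card := by simp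
    conv_rhs => rw [this, ← Finset.card_product]
    refine Finset.card_le_card_of_injOn (fun r => (fun j => r j.castSucc, r (Fin.last k))) ?_ ?_
    · intro r hr
      simp only [Finset.coe_filter, Finset.mem_univ, true_and, Set.mem_ofPred_eq,
        Finset.coe_product, Set.mem_prod, Finset.coe_univ, Set.mem_univ, and_true] at hr ⊢
      refine hr.trans (Finset.card_le_card ?_)
      intro i hi
      simp only [Finset.mem_filter] at hi ⊢
      exact ⟨hi.1, fun j => hi.2 j.castSucc⟩
    · intro r _ r' _ hrr
      simp only [Prod.mk.injEq] at hrr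
      funext j
      refine Fin.lastCases hrr.2 (fun j => congrFun hrr.1 j) j
  unfold fracFilled
  rw [pow_succ, div_le_div_iff₀ (by positivity) (by positivity)]
  have : (fillCount ω n (k + 1) : ℝ) ≤ 2 * fillCount ω n k := by exact_mod_cast h
  have h0 : (0:ℝ) < 2 ^ k := by positivity
  nlinarith

lemma fracFilled_anti (ω : ℕ → ℕ → Bool) (n : ℕ) : Antitone (fracFilled ω n) :=
  antitone_nat_of_succ_le (fracFilled_succ_le ω n)

lemma fillCount_le (ω : ℕ → ℕ → Bool) (n k : ℕ) : fillCount ω n k ≤ n := by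
  classical
  unfold fillCount
  calc _ ≤ ((Finset.range n).image fun i => fun j : Fin k => ω i j).card := by
        refine Finset.card_le_card fun r hr => ?_
        simp only [Finset.mem_filter, Finset.mem_univ, true_and] at hr
        have : 0 < prefCount ω n k r := by omega
        obtain ⟨i, hi⟩ := Finset.card_pos.1 this
        simp only [Finset.mem_filter] at hi
        exact Finset.mem_image.2 ⟨i, hi.1, funext hi.2⟩
    _ ≤ n := by simpa using Finset.card_image_le (s := Finset.range n)
                  (f := fun i => fun j : Fin k => ω i j)

lemma bdd_fill {α : ℝ} (hα : 0 < α) (ω : ℕ → ℕ → Bool) (n : ℕ) :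
    BddAbove {k | α ≤ fracFilled ω n k} := by
  obtain ⟨m, hm⟩ := pow_unbounded_of_one_lt ((n : ℝ) / α) (one_lt_two)
  refine ⟨m, fun k hk => ?_⟩
  by_contra hc
  push Not at hc
  have h1 : α ≤ fracFilled ω n m := le_trans hk (fracFilled_anti ω n hc.le)
  unfold fracFilled at h1
  rw [le_div_iff₀ (by positivity)] at h1
  rw [div_lt_iff₀ hα] at hm
  have : (fillCount ω n m : ℝ) ≤ n := by exact_mod_cast fillCount_le ω n m
  linarith

lemma frac_of_level_ge {α : ℝ} (hα : 0 < α) (ω : ℕ → ℕ → Bool) (n k : ℕ) (hk : k ≤ fillupLevel α ω n)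
    (hF : 0 < fillupLevel α ω n) : α ≤ fracFilled ω n k := by
  have hne : {k | α ≤ fracFilled ω n k}.Nonempty := by
    by_contra hc
    rw [Set.not_nonempty_iff_eq_empty] at hc
    simp [fillupLevel, hc] at hF
  have := Nat.sSup_mem hne (bdd_fill hα ω n)
  exact le_trans this (fracFilled_anti ω n hk)

lemma frac_of_level_lt {α : ℝ} (hα : 0 < α) (ω : ℕ → ℕ → Bool) (n k : ℕ) (hk : fillupLevel α ω n < k) :
    fracFilled ω n k < α := by
  by_contra hc
  push Not at hc
  exact absurd (le_csSup (bdd_fill hα ω n) hc) (not_le.2 hk)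

lemma eventually_conditions (L A δ : ℝ) (hL : 0 < L) (hA : 0 < A) (hδ : 0 < δ) :
    ∀ᶠ s : ℝ in atTop, 1 ≤ s ∧ L * (A + 1) ≤ s ∧ Real.exp (-(A * L * s / 2)) ≤ δ ∧
      4 * Real.exp (L - A * L * s / 2) ≤ δ := by
  have h1 : Tendsto (fun s : ℝ => A * L * s / 2) atTop atTop := by
    have : Tendsto (fun s : ℝ => (A * L / 2) * s) atTop atTop :=
      tendsto_id.const_mul_atTop (by positivity)
    refine this.congr fun s => by ring
  have h2 : Tendsto (fun s : ℝ => Real.exp (-(A * L * s / 2))) atTop (nhds 0) :=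
    Real.tendsto_exp_neg_atTop_nhds_zero.comp h1
  have h3 : Tendsto (fun s : ℝ => 4 * Real.exp (L - A * L * s / 2)) atTop (nhds 0) := by
    have := h2.const_mul (4 * Real.exp L)
    rw [mul_zero] at this
    refine this.congr fun s => ?_
    rw [mul_assoc, ← Real.exp_add]; ring_nf
  filter_upwards [eventually_ge_atTop 1, eventually_ge_atTop (L * (A + 1)),
    h2.eventually_le_const hδ, h3.eventually_le_const hδ] with s a b c d
  exact ⟨a, b, c, d⟩

set_option maxHeartbeats 1000000 in
lemma part_one (p α L : ℝ) (hp : 0 < p) (hp1 : p < 1) (hα : 0 < α) (hα1 : α < 1)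
    (hL : L = - ((Real.log p + Real.log (1 - p)) / 2)) (hLpos : 0 < L)
    (ν : Measure (ℕ → ℕ → Bool)) (hν : IIDBits p ν) (ε : ℝ) (hε : 0 < ε) :
    ∃ A > (0 : ℝ), ∀ᶠ n : ℕ in atTop,
      ν {ω | A * Real.sqrt (Real.log n) <
          |(fillupLevel α ω n : ℝ) - Real.log n / L|} < ENNReal.ofReal ε := by
  have := hν.1
  obtain ⟨D, hD⟩ : ∃ D, D = (Real.log p - Real.log (1 - p)) / 2 := ⟨_, rfl⟩
  obtain ⟨c, hc, hcα, hcα1⟩ : ∃ c > 0, c ≤ α ∧ c ≤ 1 - α :=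
    ⟨min α (1 - α), lt_min hα (by linarith), min_le_left _ _, min_le_right _ _⟩
  obtain ⟨A, hA⟩ : ∃ A, A = 1 + 64 * D ^ 2 / (L ^ 3 * (c * ε)) := ⟨_, rfl⟩
  have hA1 : 1 ≤ A := by
    rw [hA]
    have : 0 ≤ 64 * D ^ 2 / (L ^ 3 * (c * ε)) := by positivity
    linarith
  have hA2 : 64 * D ^ 2 ≤ A ^ 2 * (L ^ 3 * (c * ε)) := by
    have h1 : 64 * D ^ 2 / (L ^ 3 * (c * ε)) ≤ A ^ 2 := by nlinarith
    rwa [div_le_iff₀ (by positivity)] at h1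
  have hA0 : 0 < A := by linarith
  refine ⟨A, hA0, ?_⟩
  have hs : Tendsto (fun n : ℕ => Real.sqrt (Real.log n)) atTop atTop :=
    Real.tendsto_sqrt_atTop.comp (Real.tendsto_log_atTop.comp tendsto_natCast_atTop_atTop)
  filter_upwards [hs.eventually (eventually_conditions L A (c * ε / 8) hLpos hA0 (by positivity)),
    eventually_gt_atTop 0] with n hn hn0
  obtain ⟨s, hsdef⟩ : ∃ s, s = Real.sqrt (Real.log n) := ⟨_, rfl⟩
  rw [← hsdef] at hn ⊢
  obtain ⟨hs1, hs2, hs3, hs4⟩ := hn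
  have hn' : (0 : ℝ) < n := by exact_mod_cast hn0
  have hlog : Real.log n = s ^ 2 := by
    rw [hsdef, Real.sq_sqrt]
    exact Real.log_nonneg (by exact_mod_cast hn0)
  have hnexp : (n : ℝ) = Real.exp (s ^ 2) := by rw [← hlog, Real.exp_log hn']
  rw [hlog]
  have hK : A * s + s ≤ s ^ 2 / L := by
    rw [le_div_iff₀ hLpos]; nlinarith
  have hKL : s ^ 2 / L * L = s ^ 2 := by field_simp
  obtain ⟨T, hT⟩ : ∃ T, T = A * L * s / 2 := ⟨_, rfl⟩
  have hTpos : 0 < T := by rw [hT]; positivity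
  have hAs : 0 < A * s := by positivity
  -- the Chebyshev term
  have hcheb : ∀ k : ℕ, (k : ℝ) ≤ 2 * (s ^ 2 / L) → k * D ^ 2 / T ^ 2 ≤ c * ε / 8 := by
    intro k hk
    rw [div_le_iff₀ (by positivity), hT]
    have h1 : (k : ℝ) * D ^ 2 ≤ 2 * (s ^ 2 / L) * D ^ 2 := by gcongr
    refine h1.trans ?_
    have h2 : 2 * (s ^ 2 / L) * D ^ 2 = 64 * D ^ 2 * (s ^ 2 / (32 * L)) := by field_simp; ring
    rw [h2]
    calc 64 * D ^ 2 * (s ^ 2 / (32 * L)) ≤ A ^ 2 * (L ^ 3 * (c * ε)) * (s ^ 2 / (32 * L)) := by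
          gcongr
      _ = _ := by field_simp; norm_num
  -- upper tail
  obtain ⟨k, hk⟩ : ∃ k, k = ⌈s ^ 2 / L + A * s⌉₊ := ⟨_, rfl⟩
  have hk1 : s ^ 2 / L + A * s ≤ k := by rw [hk]; exact Nat.le_ceil _
  have hk2 : (k : ℝ) < s ^ 2 / L + A * s + 1 := by
    rw [hk]; exact Nat.ceil_lt_add_one (by positivity)
  have U := upper_tail hp hp1 hν α n k L D T hTpos hL hD
  have U1 : (n : ℝ) * Real.exp (T - k * L) ≤ c * ε / 8 := by
    refine le_trans ?_ hs3
    rw [hnexp, ← Real.exp_add]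
    refine Real.exp_le_exp.2 ?_
    have : (s ^ 2 / L + A * s) * L ≤ k * L := by gcongr
    have e : (s ^ 2 / L + A * s) * L = s ^ 2 + A * L * s := by linear_combination hKL
    rw [hT]; linarith
  have U2 := hcheb k (by linarith)
  -- lower tail
  obtain ⟨l, hl⟩ : ∃ l, l = ⌈s ^ 2 / L - A * s⌉₊ := ⟨_, rfl⟩
  have hl2 : (l : ℝ) < s ^ 2 / L - A * s + 1 := by
    rw [hl]; exact Nat.ceil_lt_add_one (by linarith)
  have V := lower_tail hp hp1 hν α n l hn0 L D T hTpos hL hD hα1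
  have V1 : 4 / (n : ℝ) * Real.exp (T + l * L) ≤ c * ε / 8 := by
    refine le_trans ?_ hs4
    rw [hnexp, div_mul_eq_mul_div, mul_div_assoc, ← Real.exp_sub]
    refine mul_le_mul_of_nonneg_left (Real.exp_le_exp.2 ?_) (by norm_num)
    have : l * L ≤ (s ^ 2 / L - A * s + 1) * L := by gcongr
    have e : (s ^ 2 / L - A * s + 1) * L = s ^ 2 - A * L * s + L := by linear_combination hKL
    rw [hT]; linarith
  have V2 := hcheb l (by linarith)
  have hsub : {ω | A * s < |(fillupLevel α ω n : ℝ) - s ^ 2 / L|} ⊆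
      {ω | α ≤ fracFilled ω n k} ∪ {ω | fracFilled ω n l < α} := by
    intro ω hω
    have hω : A * s < |(fillupLevel α ω n : ℝ) - s ^ 2 / L| := hω
    rcases lt_abs.1 hω with h | h
    · left
      have h1 : s ^ 2 / L + A * s < fillupLevel α ω n := by linarith
      refine frac_of_level_ge hα ω n k ?_ ?_
      · rw [hk]; exact Nat.ceil_le.2 h1.le
      · have : (0 : ℝ) < fillupLevel α ω n := lt_trans (by positivity) h1
        exact_mod_cast this
    · right
      refine frac_of_level_lt hα ω n l ?_
      rw [hl, Nat.lt_ceil]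
      linarith
  set P1 := ν.real {ω | α ≤ fracFilled ω n k}
  set P2 := ν.real {ω | fracFilled ω n l < α}
  have hP : ν.real {ω | A * s < |(fillupLevel α ω n : ℝ) - s ^ 2 / L|} ≤ P1 + P2 :=
    (measureReal_mono hsub).trans (measureReal_union_le _ _)
  have hP1 : c * P1 ≤ c * ε / 4 :=
    (mul_le_mul_of_nonneg_right hcα measureReal_nonneg).trans (by linarith)
  have hP2 : c * P2 ≤ c * ε / 4 :=
    (mul_le_mul_of_nonneg_right hcα1 measureReal_nonneg).trans (by linarith)
  have hlt : ν.real {ω | A * s < |(fillupLevel α ω n : ℝ) - s ^ 2 / L|} < ε := by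
    refine lt_of_le_of_lt hP (lt_of_mul_lt_mul_left ?_ hc.le)
    have : 0 < c * ε := by positivity
    linarith
  rw [measureReal_def] at hlt
  exact (ENNReal.lt_ofReal_iff_toReal_lt (measure_ne_top _ _)).2 hlt

end helpers

/-- Corollary of Theorem 1: `F_n(α) = log_{1/√(pq)} n + O_p(√(ln n))`; in particular
`F_n(α) / log_{1/√(pq)} n → 1` in probability. -/
theorem fillupLevel_first_order
    (p q α : ℝ) (hp : 0 < p) (hp1 : p < 1) (hq : q = 1 - p) (hα : 0 < α) (hα1 : α < 1)
    (ν : Measure (ℕ → ℕ → Bool)) (hν : IIDBits p ν) :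
    (∀ ε > (0 : ℝ), ∃ A > (0 : ℝ), ∀ᶠ n : ℕ in atTop,
      ν {ω | A * Real.sqrt (Real.log n) <
          |(fillupLevel α ω n : ℝ) - Real.logb (1 / Real.sqrt (p * q)) n|}
        < ENNReal.ofReal ε) ∧
    (∀ ε > (0 : ℝ),
      Tendsto
        (fun n : ℕ =>
          ν {ω | ε < |(fillupLevel α ω n : ℝ) / Real.logb (1 / Real.sqrt (p * q)) n - 1|})
        atTop (nhds 0)) := by
  subst hq
  obtain ⟨L, hL⟩ : ∃ L, L = - ((Real.log p + Real.log (1 - p)) / 2) := ⟨_, rfl⟩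
  have hq0 : 0 < 1 - p := by linarith
  have hLpos : 0 < L := by
    have h1 := Real.log_neg hp hp1
    have h2 := Real.log_neg hq0 (by linarith)
    rw [hL]; linarith
  have hlogb : ∀ n : ℕ, Real.logb (1 / Real.sqrt (p * (1 - p))) n = Real.log n / L := by
    intro n
    rw [Real.logb, one_div, Real.log_inv, Real.log_sqrt (by positivity),
      Real.log_mul hp.ne' hq0.ne', hL]
  simp only [hlogb]
  have main := part_one p α L hp hp1 hα hα1 hL hLpos ν hν
  refine ⟨main, fun ε hε => ?_⟩
  rw [ENNReal.tendsto_nhds_zero]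
  intro δ hδ
  obtain ⟨δ', hδ'0, hδ'⟩ : ∃ δ' : ℝ, 0 < δ' ∧ ENNReal.ofReal δ' ≤ δ := by
    rcases eq_or_ne δ ⊤ with h | h
    · exact ⟨1, one_pos, by simp [h]⟩
    · exact ⟨δ.toReal, ENNReal.toReal_pos hδ.ne' h, by rw [ENNReal.ofReal_toReal h]⟩
  obtain ⟨A, hA, hev⟩ := main δ' hδ'0
  have hs : Tendsto (fun n : ℕ => Real.sqrt (Real.log n)) atTop atTop :=
    Real.tendsto_sqrt_atTop.comp (Real.tendsto_log_atTop.comp tendsto_natCast_atTop_atTop)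
  filter_upwards [hev, hs.eventually (eventually_ge_atTop (A * L / ε)),
    hs.eventually (eventually_ge_atTop 1)] with n h1 h2 h3
  refine le_trans (measure_mono ?_) (h1.le.trans hδ')
  intro ω hω
  have hω : ε < |(fillupLevel α ω n : ℝ) / (Real.log n / L) - 1| := hω
  show A * Real.sqrt (Real.log n) < |(fillupLevel α ω n : ℝ) - Real.log n / L|
  have hlog0 : 0 < Real.log n := by
    by_contra hc
    rw [Real.sqrt_eq_zero_of_nonpos (not_lt.1 hc)] at h3
    linarith
  have hsq := Real.sq_sqrt hlog0.le
  set s := Real.sqrt (Real.log n)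
  have hK : 0 < Real.log n / L := by positivity
  have e : (fillupLevel α ω n : ℝ) / (Real.log n / L) - 1 =
      ((fillupLevel α ω n : ℝ) - Real.log n / L) / (Real.log n / L) := by
    rw [sub_div, div_self hK.ne']
  rw [e, abs_div, abs_of_pos hK, lt_div_iff₀ hK] at hω
  refine lt_of_le_of_lt ?_ hω
  rw [div_le_iff₀ hε] at h2
  rw [← mul_div_assoc, le_div_iff₀ hLpos, ← hsq]
  nlinarith
end
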